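/- Let n ≥ 1, 0 < λ < n+1, κ, θ > 0 with κθ ≥ 1, and let α, β ∈ ℝ satisfy α < 1/(θ+1), β < 1/(κ+1), α + β ≥ 0 and 1/(θ+1) + 1/(κ+1) = (α+β+λ)/(n+1). Suppose u, v : ℝ^{n+1}_+ → (0,∞) satisfy the Euler–Lagrange integral system u(x,t) = t^{−α} ∫_{ℝ^{n+1}_+} v(y,z)^κ z^{−β} |(x,t)−(y,z)|^{−λ} dy dz and v(y,z) = z^{−β} ∫_{ℝ^{n+1}_+} u(x,t)^θ t^{−α} |(x,t)−(y,z)|^{−λ} dx dt for all points of ℝ^{n+1}_+, and that ∫_{ℝ^{n+1}_+} u^{θ+1} < ∞. Then u and v are radially symmetric and monotone decreasing in the x-variable about some point x₀ ∈ ℝ^n: there exists x₀ ∈ ℝ^n such that for all t > 0 and all x, x' ∈ ℝ^n, if |x−x₀| = |x'−x₀| then u(x,t) = u(x',t) and v(x,t) = v(x',t), and if |x−x₀| ≤ |x'−x₀| then u(x,t) ≥ u(x',t) and v(x,t) ≥ v(x',t). -/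

import Mathlib

open MeasureTheory ENNReal

noncomputable section

/-- The upper half space `ℝ^{n+1}_+ = {(x,t) : t > 0}`. -/
def upperHalf (n : ℕ) : Set (EuclideanSpace ℝ (Fin n) × ℝ) := {X | 0 < X.2}

/-- The Euclidean distance `|(x,t)-(y,z)|` on `ℝ^n × ℝ`. -/
def hsDist {n : ℕ} (X Y : EuclideanSpace ℝ (Fin n) × ℝ) : ℝ :=
  Real.sqrt (‖X.1 - Y.1‖ ^ 2 + (X.2 - Y.2) ^ 2)

/-!
The proof is the method of moving planes in integral form.

Let `κ * θ > 1` and, the system being symmetric under exchanging `u` and `v`, let `θ > 1`.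
Splitting a potential over the two sides of a plane shows that the excess of `u` over its reflection
is at most the potential of the excess of `v ^ κ`, and vice versa. The Hardy–Littlewood–Sobolev
inequality with weights `t ^ (-α)` and `z ^ (-β)`, Minkowski's inequality and Hölder's inequality
turn this into `w ≤ M * δ * w`, where `w` is the norm of the excess of `u` and `δ` is a power of the
energy of `u` on the set where the excess is positive. Hence there is no excess at all as soon as
this energy is small. The energy being finite, this holds for planes far out. Sliding the plane
inwards, at the last admissible position `u` must agree with its reflection: otherwise the
comparison is strict, the excess set shrinks to a null set and the plane could slide further. Two
distinct parallel symmetry planes would make `u` translation invariant, contradicting finite energy,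
so the symmetry planes of all directions pass through one point.

If `κ * θ = 1`, the equality case of Hölder's inequality shows that a solution is determined by its
energy. It would then be symmetric about every plane, so there is no solution.
-/

open Module Filter Topology

/-! ### Bounded bilinear integral forms -/

section BilinearForms

variable {S S' : Type*} [MeasurableSpace S] [MeasurableSpace S'] {μ : Measure S} {ν : Measure S'}

/-- Boundedness by `C` of the bilinear form `(f, g) ↦ ∫∫ f x * g y * K x y` on `L^{1/a} × L^{1/b}`,
expressed through the densities `A = f ^ (1 / a)` and `B = g ^ (1 / b)`. -/
def IsBilinearBound (μ : Measure S) (ν : Measure S') (K : S → S' → ℝ≥0∞) (a b : ℝ) (C : ℝ≥0∞) :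
    Prop :=
  ∀ ⦃A : S → ℝ≥0∞⦄ ⦃B : S' → ℝ≥0∞⦄, Measurable A → Measurable B →
    (∀ x, A x ≠ ⊤) → (∀ y, B y ≠ ⊤) → ∫⁻ x, A x ∂μ ≠ ⊤ → ∫⁻ y, B y ∂ν ≠ ⊤ →
    ∫⁻ x, ∫⁻ y, A x ^ a * B y ^ b * K x y ∂ν ∂μ ≤ C * (∫⁻ x, A x ∂μ) ^ a * (∫⁻ y, B y ∂ν) ^ b

lemma rpow_mul_inv_rpow_cancel {c : ℝ≥0∞} (hc0 : c ≠ 0) (hc : c ≠ ⊤) {r : ℝ} (hr : 0 ≤ r) :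
    c ^ r * c⁻¹ ^ r = 1 := by
  rw [← ENNReal.mul_rpow_of_nonneg _ _ hr, ENNReal.mul_inv_cancel hc0 hc, ENNReal.one_rpow]

lemma IsBilinearBound.of_le_one {K : S → S' → ℝ≥0∞} {a b : ℝ} (ha : 0 < a) (hb : 0 < b) {C : ℝ≥0∞}
    (hK : ∀ ⦃A : S → ℝ≥0∞⦄ ⦃B : S' → ℝ≥0∞⦄, Measurable A → Measurable B →
      (∀ x, A x ≠ ⊤) → (∀ y, B y ≠ ⊤) → ∫⁻ x, A x ∂μ ≤ 1 → ∫⁻ y, B y ∂ν ≤ 1 →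
      ∫⁻ x, ∫⁻ y, A x ^ a * B y ^ b * K x y ∂ν ∂μ ≤ C) :
    IsBilinearBound μ ν K a b C := by
  intro A B hA hB hA_top hB_top hA_int hB_int
  set I := ∫⁻ x, A x ∂μ
  set J := ∫⁻ y, B y ∂ν
  rcases eq_or_ne I 0 with hI0 | hI0
  · refine (le_of_eq ?_).trans zero_le
    refine lintegral_eq_zero_of_ae_eq_zero ?_
    filter_upwards [(lintegral_eq_zero_iff hA).1 hI0] with x hx
    simp [hx, ENNReal.zero_rpow_of_pos ha]
  rcases eq_or_ne J 0 with hJ0 | hJ0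
  · refine (le_of_eq ?_).trans zero_le
    refine lintegral_eq_zero_of_ae_eq_zero (.of_forall fun x => ?_)
    refine lintegral_eq_zero_of_ae_eq_zero ?_
    filter_upwards [(lintegral_eq_zero_iff hB).1 hJ0] with y hy
    simp [hy, ENNReal.zero_rpow_of_pos hb]
  have hI_inv : I⁻¹ ≠ ⊤ := ENNReal.inv_ne_top.2 hI0
  have hJ_inv : J⁻¹ ≠ ⊤ := ENNReal.inv_ne_top.2 hJ0
  have hscale : ∀ x y, (I⁻¹ * A x) ^ a * (J⁻¹ * B y) ^ b * K x y =
      (I⁻¹ ^ a * J⁻¹ ^ b) * (A x ^ a * B y ^ b * K x y) := fun x y => by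
    rw [ENNReal.mul_rpow_of_nonneg _ _ ha.le, ENNReal.mul_rpow_of_nonneg _ _ hb.le]
    ring
  have hc : I⁻¹ ^ a * J⁻¹ ^ b ≠ ⊤ := ENNReal.mul_ne_top
    (ENNReal.rpow_ne_top_of_nonneg ha.le hI_inv) (ENNReal.rpow_ne_top_of_nonneg hb.le hJ_inv)
  have hunit := hK (hA.const_mul I⁻¹) (hB.const_mul J⁻¹)
    (fun x => ENNReal.mul_ne_top hI_inv (hA_top x)) (fun y => ENNReal.mul_ne_top hJ_inv (hB_top y))
    (by rw [lintegral_const_mul' _ _ hI_inv, ENNReal.inv_mul_cancel hI0 hA_int])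
    (by rw [lintegral_const_mul' _ _ hJ_inv, ENNReal.inv_mul_cancel hJ0 hB_int])
  simp_rw [hscale, fun x => lintegral_const_mul' (μ := ν) _ (fun y => A x ^ a * B y ^ b * K x y) hc]
    at hunit
  rw [lintegral_const_mul' _ _ hc] at hunit
  calc ∫⁻ x, ∫⁻ y, A x ^ a * B y ^ b * K x y ∂ν ∂μ
      = (I ^ a * I⁻¹ ^ a) * (J ^ b * J⁻¹ ^ b) * ∫⁻ x, ∫⁻ y, A x ^ a * B y ^ b * K x y ∂ν ∂μ := by
        rw [rpow_mul_inv_rpow_cancel hI0 hA_int ha.le,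
          rpow_mul_inv_rpow_cancel hJ0 hB_int hb.le, one_mul, one_mul]
    _ = I ^ a * J ^ b *
          (I⁻¹ ^ a * J⁻¹ ^ b * ∫⁻ x, ∫⁻ y, A x ^ a * B y ^ b * K x y ∂ν ∂μ) := by ring
    _ ≤ I ^ a * J ^ b * C := by gcongr
    _ = C * I ^ a * J ^ b := by ring

lemma lintegral_lintegral_add_right [SFinite ν] (f : S → S' → ℝ≥0∞) {g : S → S' → ℝ≥0∞}
    (hg : Measurable (Function.uncurry g)) :
    ∫⁻ x, ∫⁻ y, f x y + g x y ∂ν ∂μ = ∫⁻ x, ∫⁻ y, f x y ∂ν ∂μ + ∫⁻ x, ∫⁻ y, g x y ∂ν ∂μ :=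
  (lintegral_congr fun _ => lintegral_add_right _ hg.of_uncurry_left).trans
    (lintegral_add_right _ hg.lintegral_prod_right')

lemma lintegral_lintegral_mul_le {A : S → ℝ≥0∞} {Φ : S → S' → ℝ≥0∞} {C : ℝ≥0∞}
    (hA : Measurable A) (hΦ : ∀ x, Measurable (Φ x)) (hA_int : ∫⁻ x, A x ∂μ ≤ 1)
    (hΦ_int : ∀ᵐ x ∂μ, A x ≠ 0 → ∫⁻ y, Φ x y ∂ν ≤ C) :
    ∫⁻ x, ∫⁻ y, A x * Φ x y ∂ν ∂μ ≤ C := calc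
  _ ≤ ∫⁻ x, A x * C ∂μ := lintegral_mono_ae (hΦ_int.mono fun x hx => by
    rw [lintegral_const_mul _ (hΦ x)]
    rcases eq_or_ne (A x) 0 with h0 | h0
    · simp [h0]
    · gcongr
      exact hx h0)
  _ ≤ C := by
    rw [lintegral_mul_const _ hA]
    exact mul_le_of_le_one_left' hA_int

lemma lintegral_lintegral_le_of_le_mul_add [SFinite μ] [SFinite ν] {A : S → ℝ≥0∞} {B : S' → ℝ≥0∞}
    {T Φ Ψ : S → S' → ℝ≥0∞} {C₁ C₂ : ℝ≥0∞} (hA : Measurable A) (hB : Measurable B)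
    (hΦ : Measurable (Function.uncurry Φ)) (hΨ : Measurable (Function.uncurry Ψ))
    (hA_int : ∫⁻ x, A x ∂μ ≤ 1) (hB_int : ∫⁻ y, B y ∂ν ≤ 1)
    (hT : ∀ᵐ x ∂μ, ∀ᵐ y ∂ν, T x y ≤ A x * B y + A x * Φ x y + B y * Ψ x y)
    (hΦ_int : ∀ᵐ x ∂μ, A x ≠ 0 → ∫⁻ y, Φ x y ∂ν ≤ C₁)
    (hΨ_int : ∀ᵐ y ∂ν, B y ≠ 0 → ∫⁻ x, Ψ x y ∂μ ≤ C₂) :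
    ∫⁻ x, ∫⁻ y, T x y ∂ν ∂μ ≤ 1 + C₁ + C₂ := by
  have hAΦ : Measurable (Function.uncurry fun x y => A x * Φ x y) :=
    (hA.comp measurable_fst).mul hΦ
  have hBΨ : Measurable (Function.uncurry fun x y => B y * Ψ x y) :=
    (hB.comp measurable_snd).mul hΨ
  calc ∫⁻ x, ∫⁻ y, T x y ∂ν ∂μ
      ≤ ∫⁻ x, ∫⁻ y, A x * B y + A x * Φ x y + B y * Ψ x y ∂ν ∂μ :=
        lintegral_mono_ae (hT.mono fun x hx => lintegral_mono_ae hx)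
    _ = ∫⁻ x, ∫⁻ y, A x * B y ∂ν ∂μ + ∫⁻ x, ∫⁻ y, A x * Φ x y ∂ν ∂μ
          + ∫⁻ y, ∫⁻ x, B y * Ψ x y ∂μ ∂ν := by
        rw [lintegral_lintegral_add_right _ hBΨ, lintegral_lintegral_add_right _ hAΦ,
          lintegral_lintegral_swap hBΨ.aemeasurable]
    _ ≤ 1 + C₁ + C₂ := by
        gcongr
        · exact lintegral_lintegral_mul_le hA (fun _ => hB) hA_int (.of_forall fun _ _ => hB_int)
        · exact lintegral_lintegral_mul_le hA (fun _ => hΦ.of_uncurry_left) hA_int hΦ_int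
        · exact lintegral_lintegral_mul_le hB (fun _ => hΨ.of_uncurry_right) hB_int hΨ_int

lemma IsBilinearBound.of_forall_pos_le [SFinite μ] [SFinite ν] {p q : ℝ} (hp : p < 1) (hq : q < 1)
    {K : S → S' → ℝ} {Φ Ψ : ℝ → S → S' → ℝ} {C₁ C₂ : ℝ≥0∞}
    (hΦ : Measurable fun z : ℝ × S × S' => Φ z.1 z.2.1 z.2.2)
    (hΨ : Measurable fun z : ℝ × S × S' => Ψ z.1 z.2.1 z.2.2)
    (hK : ∀ᵐ x ∂μ, ∀ᵐ y ∂ν, ∀ a b : ℝ, 0 < a → 0 < b →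
      a ^ (1 - p) * b ^ (1 - q) * K x y ≤ a * b + a * Φ a x y + b * Ψ b x y)
    (hΦ_int : ∀ᵐ x ∂μ, ∀ a : ℝ, 0 < a → ∫⁻ y, ENNReal.ofReal (Φ a x y) ∂ν ≤ C₁)
    (hΨ_int : ∀ᵐ y ∂ν, ∀ b : ℝ, 0 < b → ∫⁻ x, ENNReal.ofReal (Ψ b x y) ∂μ ≤ C₂) :
    IsBilinearBound μ ν (fun x y => ENNReal.ofReal (K x y)) (1 - p) (1 - q) (1 + C₁ + C₂) := by
  refine .of_le_one (by linarith) (by linarith) fun A B hA hB hA_top hB_top hA_int hB_int => ?_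
  refine lintegral_lintegral_le_of_le_mul_add
    (Φ := fun x y => ENNReal.ofReal (Φ (A x).toReal x y))
    (Ψ := fun x y => ENNReal.ofReal (Ψ (B y).toReal x y)) hA hB ?_ ?_ hA_int hB_int ?_
    (hΦ_int.mono fun x hx h0 => hx _ (ENNReal.toReal_pos h0 (hA_top x)))
    (hΨ_int.mono fun y hy h0 => hy _ (ENNReal.toReal_pos h0 (hB_top y)))
  · exact (hΦ.comp (f := fun z : S × S' => ((A z.1).toReal, z)) (by fun_prop)).ennreal_ofReal
  · exact (hΨ.comp (f := fun z : S × S' => ((B z.2).toReal, z)) (by fun_prop)).ennreal_ofReal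
  filter_upwards [hK] with x hx
  filter_upwards [hx] with y hxy
  rcases eq_or_ne (A x) 0 with hA0 | hA0
  · simp [hA0, ENNReal.zero_rpow_of_pos (sub_pos.2 hp)]
  rcases eq_or_ne (B y) 0 with hB0 | hB0
  · simp [hB0, ENNReal.zero_rpow_of_pos (sub_pos.2 hq)]
  have ha := ENNReal.toReal_pos hA0 (hA_top x)
  have hb := ENNReal.toReal_pos hB0 (hB_top y)
  have hle := ENNReal.ofReal_le_ofReal (hxy _ _ ha hb)
  rw [ENNReal.ofReal_mul (by positivity), ENNReal.ofReal_mul (by positivity),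
    ← ENNReal.ofReal_rpow_of_pos ha, ← ENNReal.ofReal_rpow_of_pos hb,
    ENNReal.ofReal_toReal (hA_top x), ENNReal.ofReal_toReal (hB_top y)] at hle
  refine hle.trans <| ENNReal.ofReal_add_le.trans <|
    (add_le_add_left ENNReal.ofReal_add_le _).trans (le_of_eq ?_)
  rw [ENNReal.ofReal_mul ha.le, ENNReal.ofReal_mul ha.le, ENNReal.ofReal_mul hb.le,
    ENNReal.ofReal_toReal (hA_top x), ENNReal.ofReal_toReal (hB_top y)]

lemma IsBilinearBound.restrict {K : S → S' → ℝ≥0∞} {a b : ℝ} (ha : 0 < a) (hb : 0 < b) {C : ℝ≥0∞}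
    (hK : IsBilinearBound μ ν K a b C) {s : Set S} {t : Set S'} (hs : MeasurableSet s)
    (ht : MeasurableSet t) : IsBilinearBound (μ.restrict s) (ν.restrict t) K a b C := by
  intro A B hA hB hA_top hB_top hA_int hB_int
  rw [← lintegral_indicator hs] at hA_int ⊢
  rw [← lintegral_indicator ht] at hB_int
  rw [← lintegral_indicator hs A, ← lintegral_indicator ht B]
  refine le_of_eq_of_le ?_ (hK (hA.indicator hs) (hB.indicator ht)
    (fun x => ((Set.indicator_le_self s A x).trans_lt (hA_top x).lt_top).ne)
    (fun y => ((Set.indicator_le_self t B y).trans_lt (hB_top y).lt_top).ne) hA_int hB_int)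
  refine lintegral_congr fun x => ?_
  by_cases hx : x ∈ s
  · rw [Set.indicator_of_mem hx, Set.indicator_of_mem hx, ← lintegral_indicator ht]
    refine lintegral_congr fun y => ?_
    by_cases hy : y ∈ t <;> simp [hy, ENNReal.zero_rpow_of_pos hb]
  · simp [hx, ENNReal.zero_rpow_of_pos ha]

lemma IsBilinearBound.of_le_add [SFinite ν] {K K₁ K₂ : S → S' → ℝ≥0∞} {a b : ℝ} {C₁ C₂ k : ℝ≥0∞}
    (hk : k ≠ ⊤) (hK₁ : IsBilinearBound μ ν K₁ a b C₁) (hK₂ : IsBilinearBound μ ν K₂ a b C₂)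
    (hK₂_meas : Measurable (Function.uncurry K₂))
    (hK : ∀ᵐ x ∂μ, ∀ᵐ y ∂ν, K x y ≤ k * (K₁ x y + K₂ x y)) :
    IsBilinearBound μ ν K a b (k * (C₁ + C₂)) := by
  intro A B hA hB hA_top hB_top hA_int hB_int
  have hsum : Measurable (Function.uncurry fun x y => A x ^ a * B y ^ b * K₂ x y) :=
    (((hA.comp measurable_fst).pow_const a).mul ((hB.comp measurable_snd).pow_const b)).mul hK₂_meas
  calc ∫⁻ x, ∫⁻ y, A x ^ a * B y ^ b * K x y ∂ν ∂μ
      ≤ ∫⁻ x, ∫⁻ y, k * (A x ^ a * B y ^ b * K₁ x y + A x ^ a * B y ^ b * K₂ x y) ∂ν ∂μ := by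
        refine lintegral_mono_ae (hK.mono fun x hx => lintegral_mono_ae (hx.mono fun y hxy => ?_))
        calc _ ≤ A x ^ a * B y ^ b * (k * (K₁ x y + K₂ x y)) := by gcongr
          _ = _ := by ring
    _ = k * (∫⁻ x, ∫⁻ y, A x ^ a * B y ^ b * K₁ x y ∂ν ∂μ
          + ∫⁻ x, ∫⁻ y, A x ^ a * B y ^ b * K₂ x y ∂ν ∂μ) := by
        rw [← lintegral_lintegral_add_right _ hsum, ← lintegral_const_mul' _ _ hk]
        exact lintegral_congr fun x => lintegral_const_mul' _ _ hk
    _ ≤ k * (C₁ * (∫⁻ x, A x ∂μ) ^ a * (∫⁻ y, B y ∂ν) ^ b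
          + C₂ * (∫⁻ x, A x ∂μ) ^ a * (∫⁻ y, B y ∂ν) ^ b) := by
        gcongr
        · exact hK₁ hA hB hA_top hB_top hA_int hB_int
        · exact hK₂ hA hB hA_top hB_top hA_int hB_int
    _ = k * (C₁ + C₂) * (∫⁻ x, A x ∂μ) ^ a * (∫⁻ y, B y ∂ν) ^ b := by ring

lemma IsBilinearBound.flip [SFinite μ] [SFinite ν] {K : S → S' → ℝ≥0∞}
    (hK_meas : Measurable (Function.uncurry K)) {a b : ℝ} {C : ℝ≥0∞}
    (hK : IsBilinearBound μ ν K a b C) : IsBilinearBound ν μ (fun y x => K x y) b a C := by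
  intro B A hB hA hB_top hA_top hB_int hA_int
  rw [mul_right_comm C, lintegral_lintegral_swap]
  · simpa only [mul_comm (B _ ^ b)] using hK hA hB hA_top hB_top hA_int hB_int
  · exact (((hB.comp measurable_fst).pow_const b).mul ((hA.comp measurable_snd).pow_const a)).mul
      (hK_meas.comp measurable_swap) |>.aemeasurable

lemma eLpNorm'_eq_lintegral_rpow (f : S → ℝ≥0∞) (r : ℝ) :
    eLpNorm' f r μ = (∫⁻ x, f x ^ r ∂μ) ^ (1 / r) := by
  simp only [eLpNorm'_eq_lintegral_enorm, enorm_eq_self]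

lemma eLpNorm'_ne_top_iff {f : S → ℝ≥0∞} {r : ℝ} (hr : 0 < r) :
    eLpNorm' f r μ ≠ ⊤ ↔ ∫⁻ x, f x ^ r ∂μ ≠ ⊤ := by
  rw [eLpNorm'_eq_lintegral_rpow, Ne, Ne, ENNReal.rpow_eq_top_iff_of_pos (by positivity)]

lemma eLpNorm'_rpow (f : S → ℝ≥0∞) (p : ℝ) {q : ℝ} (hq : 0 < q) :
    eLpNorm' (fun x => f x ^ q) p μ = eLpNorm' f (p * q) μ ^ q :=
  eLpNorm'_enorm_rpow f p q hq

lemma IsBilinearBound.eLpNorm'_le {K : S → S' → ℝ≥0∞} {p q : ℝ} (hp : 0 < p) (hp1 : p < 1)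
    (hq1 : q < 1) {C : ℝ≥0∞} (hK : IsBilinearBound μ ν K (1 - p) (1 - q) C) {w : S → ℝ≥0∞}
    {h : S' → ℝ≥0∞} (hw : Measurable w) (hh : Measurable h) (hw_top : ∀ x, w x ≠ ⊤)
    (hh_top : ∀ y, h y ≠ ⊤) (hwh : ∀ᵐ x ∂μ, w x ≤ ∫⁻ y, h y * K x y ∂ν)
    (hw_int : eLpNorm' w p⁻¹ μ ≠ ⊤) (hh_int : eLpNorm' h (1 - q)⁻¹ ν ≠ ⊤) :
    eLpNorm' w p⁻¹ μ ≤ C * eLpNorm' h (1 - q)⁻¹ ν := by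
  have hq0 : 0 < 1 - q := sub_pos.2 hq1
  have hp_inv : 1 < p⁻¹ := (one_lt_inv₀ hp).2 hp1
  rw [eLpNorm'_ne_top_iff (by positivity)] at hw_int hh_int
  have hbound := hK (hw.pow_const p⁻¹) (hh.pow_const (1 - q)⁻¹)
    (fun x => ENNReal.rpow_ne_top_of_nonneg (by positivity) (hw_top x))
    (fun y => ENNReal.rpow_ne_top_of_nonneg (by positivity) (hh_top y)) hw_int hh_int
  rw [eLpNorm'_eq_lintegral_rpow, eLpNorm'_eq_lintegral_rpow, one_div, one_div, inv_inv, inv_inv]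
  set W := ∫⁻ x, w x ^ p⁻¹ ∂μ
  set H := ∫⁻ y, h y ^ (1 - q)⁻¹ ∂ν
  have hW : W ≤ C * W ^ (1 - p) * H ^ (1 - q) := by
    refine le_trans (lintegral_mono_ae (hwh.mono fun x hx => ?_)) hbound
    have hintegrand : ∀ y, (w x ^ p⁻¹) ^ (1 - p) * (h y ^ (1 - q)⁻¹) ^ (1 - q) * K x y =
        w x ^ (p⁻¹ - 1) * (h y * K x y) := fun y => by
      rw [← ENNReal.rpow_mul, ← ENNReal.rpow_mul, inv_mul_cancel₀ hq0.ne', ENNReal.rpow_one,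
        mul_sub, mul_one, inv_mul_cancel₀ hp.ne', mul_assoc]
    simp only [hintegrand]
    rw [lintegral_const_mul' _ _ (ENNReal.rpow_ne_top_of_nonneg (by linarith) (hw_top x))]
    calc w x ^ p⁻¹ = w x ^ (p⁻¹ - 1) * w x := by
          conv_rhs => rw [← ENNReal.rpow_one (w x), ← ENNReal.rpow_mul, one_mul,
            ← ENNReal.rpow_add_of_nonneg _ _ (by linarith) zero_le_one, sub_add_cancel]
      _ ≤ _ := by gcongr
  rcases eq_or_ne W 0 with hW0 | hW0
  · simp [hW0, ENNReal.zero_rpow_of_pos hp]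
  have hWp0 : W ^ (1 - p) ≠ 0 := (ENNReal.rpow_pos (pos_iff_ne_zero.2 hW0) hw_int).ne'
  have hWp : W ^ (1 - p) ≠ ⊤ := ENNReal.rpow_ne_top_of_nonneg (by linarith) hw_int
  rw [← ENNReal.mul_le_mul_iff_right hWp0 hWp]
  calc W ^ (1 - p) * W ^ p = W := by
        rw [← ENNReal.rpow_add _ _ hW0 hw_int, sub_add_cancel, ENNReal.rpow_one]
    _ ≤ _ := hW
    _ = _ := by ring

end BilinearForms

/-! ### The Hardy–Littlewood–Sobolev inequality -/

section HardyLittlewoodSobolev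

/-- The number `D` damped by its logarithmic distance to `A`: a replacement for the indicator of
`D ≈ A` under which pointwise power bounds sum up to an integrable majorant. -/
def logDamped (δ A D : ℝ) : ℝ := D * Real.exp (-(δ * |Real.log A - Real.log D|))

@[fun_prop]
lemma measurable_logDamped {S : Type*} [MeasurableSpace S] (δ : ℝ) {A D : S → ℝ}
    (hA : Measurable A) (hD : Measurable D) : Measurable fun x => logDamped δ (A x) (D x) := by
  unfold logDamped
  fun_prop

lemma logDamped_mul {δ A D : ℝ} (hA : 0 < A) (hD : 0 ≤ D) :
    logDamped δ A (A * D) = A * logDamped δ 1 D := by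
  rcases hD.eq_or_lt with rfl | hD
  · simp [logDamped]
  rw [logDamped, logDamped, Real.log_mul hA.ne' hD.ne', Real.log_one, mul_assoc]
  ring_nf

lemma logDamped_exp (δ a d : ℝ) :
    logDamped δ (Real.exp a) (Real.exp d) = Real.exp (d - δ * |a - d|) := by
  rw [logDamped, Real.log_exp, Real.log_exp, ← Real.exp_add, ← sub_eq_add_neg]

lemma logDamped_one_le_rpow {δ D r : ℝ} (hD : 0 < D) (hr : |r| ≤ δ) :
    logDamped δ 1 D ≤ D ^ (1 + r) := by
  obtain ⟨d, rfl⟩ : ∃ d, Real.exp d = D := ⟨Real.log D, Real.exp_log hD⟩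
  rw [show (1 : ℝ) = Real.exp 0 by simp, logDamped_exp, Real.exp_zero, ← Real.exp_mul,
    Real.exp_le_exp, zero_sub, abs_neg]
  have := neg_abs_le (d * r)
  rw [abs_mul] at this
  nlinarith [abs_nonneg d]

lemma rpow_mul_rpow_mul_rpow_le_logDamped {p q δ A B D : ℝ} (hδ0 : 0 < δ) (hδp : δ ≤ p)
    (hδq : δ ≤ q) (hδpq : δ ≤ 1 - p - q) (hA : 0 < A) (hB : 0 < B) (hD : 0 < D) :
    A ^ (1 - p) * B ^ (1 - q) * D ^ (p + q) ≤
      A * B + A * logDamped δ A D + B * logDamped δ B D := by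
  obtain ⟨a, rfl⟩ : ∃ a, Real.exp a = A := ⟨Real.log A, Real.exp_log hA⟩
  obtain ⟨b, rfl⟩ : ∃ b, Real.exp b = B := ⟨Real.log B, Real.exp_log hB⟩
  obtain ⟨d, rfl⟩ : ∃ d, Real.exp d = D := ⟨Real.log D, Real.exp_log hD⟩
  simp only [logDamped_exp, ← Real.exp_mul, ← Real.exp_add]
  have hexponent : a * (1 - p) + b * (1 - q) + d * (p + q) ≤ a + b ∨
      a * (1 - p) + b * (1 - q) + d * (p + q) ≤ a + (d - δ * |a - d|) ∨
      a * (1 - p) + b * (1 - q) + d * (p + q) ≤ b + (d - δ * |b - d|) := by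
    rcases le_total d a with hda | hda <;> rcases le_total d b with hdb | hdb
    · left; nlinarith
    · right; left; rw [abs_of_nonneg (by linarith)]; nlinarith
    · right; right; rw [abs_of_nonneg (by linarith)]; nlinarith
    · rcases le_total a b with hab | hab
      · right; right; rw [abs_of_nonpos (by linarith)]; nlinarith
      · right; left; rw [abs_of_nonpos (by linarith)]; nlinarith
  have h₁ := Real.exp_pos (a + b)
  have h₂ := Real.exp_pos (a + (d - δ * |a - d|))
  have h₃ := Real.exp_pos (b + (d - δ * |b - d|))
  rcases hexponent with h | h | h <;> linarith [Real.exp_le_exp.2 h]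

variable {E : Type*} [NormedAddCommGroup E] [NormedSpace ℝ E] [FiniteDimensional ℝ E]
  [MeasurableSpace E] [BorelSpace E] (μ : Measure E) [μ.IsAddHaarMeasure]

lemma lintegral_eq_mul_lintegral_comp_add_smul (f : E → ℝ≥0∞) (z : E) {r : ℝ} (hr : 0 < r) :
    ∫⁻ y, f y ∂μ = ENNReal.ofReal (r ^ finrank ℝ E) * ∫⁻ w, f (z + r • w) ∂μ := by
  have hsmul : MeasurableEmbedding fun w : E => r • w :=
    (Homeomorph.smulOfNeZero r hr.ne').measurableEmbedding
  rw [← lintegral_add_left_eq_self f z, ← hsmul.lintegral_map (fun y => f (z + y)),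
    Measure.map_addHaar_smul _ hr.ne', lintegral_smul_measure, smul_eq_mul, ← mul_assoc,
    ← ENNReal.ofReal_mul (by positivity), abs_of_pos (by positivity),
    mul_inv_cancel₀ (by positivity), ENNReal.ofReal_one, one_mul]

lemma lintegral_logDamped_one_lt_top [Nontrivial E] {δ : ℝ} (hδ : 0 < δ) :
    ∫⁻ w, ENNReal.ofReal (logDamped δ 1 (‖w‖ ^ (-(finrank ℝ E : ℝ)))) ∂μ < ⊤ := by
  set d : ℝ := (finrank ℝ E : ℝ)
  have hd : 0 < d := Nat.cast_pos.2 finrank_pos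
  have hrpow {w : E} (hw : 0 < ‖w‖) {r : ℝ} (hr : |r| ≤ δ) :
      logDamped δ 1 (‖w‖ ^ (-d)) ≤ ‖w‖ ^ (-(d * (1 + r))) := by
    have := logDamped_one_le_rpow (D := ‖w‖ ^ (-d)) (by positivity) hr
    rwa [← Real.rpow_mul hw.le, neg_mul] at this
  rw [← lintegral_add_compl _ (Metric.isOpen_ball (x := (0 : E)) (ε := 1)).measurableSet]
  refine ENNReal.add_lt_top.2 ⟨?_, ?_⟩
  · have hint : IntegrableOn (fun w : E => ‖w‖ ^ (-(d * (1 + -δ)))) (Metric.ball 0 1) μ :=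
      integrableOn_ball_of_norm_le_rpow (C := 1) (α := d * (1 + -δ)) (finrank_pos (R := ℝ) (M := E))
        (by nlinarith) (.of_forall fun x => by rw [one_mul, Real.norm_of_nonneg (by positivity)])
        (Measurable.aestronglyMeasurable (by fun_prop))
    refine lt_of_le_of_lt (lintegral_mono_ae ?_) hint.lintegral_lt_top
    filter_upwards [ae_restrict_of_ae (Measure.ae_ne μ (0 : E))] with w hw
    exact ENNReal.ofReal_le_ofReal (hrpow (norm_pos_iff.2 hw) (by rw [abs_neg, abs_of_pos hδ]))
  · have hfin := finite_integral_one_add_norm (μ := μ) (E := E) (r := d * (1 + δ)) (by nlinarith)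
    refine lt_of_le_of_lt ?_ (ENNReal.mul_lt_top
      (ENNReal.ofReal_lt_top (r := 2 ^ (d * (1 + δ)))) hfin)
    rw [← lintegral_const_mul _ (by fun_prop)]
    refine le_trans (setLIntegral_mono' Metric.isOpen_ball.measurableSet.compl fun w hw => ?_)
      (setLIntegral_le_lintegral _ _)
    have hw1 : 1 ≤ ‖w‖ := by simpa using hw
    rw [← ENNReal.ofReal_mul (by positivity)]
    refine ENNReal.ofReal_le_ofReal ((hrpow (by linarith) (abs_of_pos hδ).le).trans ?_)
    calc ‖w‖ ^ (-(d * (1 + δ))) = 2 ^ (d * (1 + δ)) * (2 * ‖w‖) ^ (-(d * (1 + δ))) := by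
          rw [Real.mul_rpow (by norm_num) (by positivity), ← mul_assoc,
            ← Real.rpow_add (by norm_num), add_neg_cancel, Real.rpow_zero, one_mul]
      _ ≤ 2 ^ (d * (1 + δ)) * (1 + ‖w‖) ^ (-(d * (1 + δ))) := by
          gcongr 2 ^ (d * (1 + δ)) * ?_
          exact Real.rpow_le_rpow_of_nonpos (by positivity) (by linarith)
            (by simp only [Left.neg_nonpos_iff]; positivity)

lemma lintegral_logDamped_norm_sub [Nontrivial E] (δ : ℝ) (x : E) {A : ℝ} (hA : 0 < A) :
    ∫⁻ y, ENNReal.ofReal (logDamped δ A (‖x - y‖ ^ (-(finrank ℝ E : ℝ)))) ∂μ =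
      ∫⁻ w, ENNReal.ofReal (logDamped δ 1 (‖w‖ ^ (-(finrank ℝ E : ℝ)))) ∂μ := by
  have hd : (finrank ℝ E : ℝ) ≠ 0 := by exact_mod_cast (finrank_pos (R := ℝ) (M := E)).ne'
  set r : ℝ := A ^ (-(finrank ℝ E : ℝ)⁻¹)
  have hr : 0 < r := by positivity
  have hintegrand (w : E) :
      ENNReal.ofReal (logDamped δ A (‖x - (x + r • w)‖ ^ (-(finrank ℝ E : ℝ)))) =
        ENNReal.ofReal A * ENNReal.ofReal (logDamped δ 1 (‖w‖ ^ (-(finrank ℝ E : ℝ)))) := by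
    rw [← ENNReal.ofReal_mul hA.le, ← logDamped_mul hA (by positivity), sub_add_cancel_left,
      norm_neg, norm_smul, Real.norm_of_nonneg hr.le, Real.mul_rpow hr.le (norm_nonneg _),
      ← Real.rpow_mul hA.le, neg_mul_neg, inv_mul_cancel₀ hd, Real.rpow_one]
  have hrA : r ^ finrank ℝ E * A = 1 := by
    rw [← Real.rpow_natCast, ← Real.rpow_mul hA.le, neg_mul, inv_mul_cancel₀ hd,
      Real.rpow_neg_one, inv_mul_cancel₀ hA.ne']
  rw [lintegral_eq_mul_lintegral_comp_add_smul μ _ x hr]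
  simp_rw [hintegrand]
  rw [lintegral_const_mul' _ _ ENNReal.ofReal_ne_top, ← mul_assoc,
    ← ENNReal.ofReal_mul (by positivity), hrA, ENNReal.ofReal_one, one_mul]

theorem exists_isBilinearBound_norm_sub_rpow [Nontrivial E] {p q : ℝ} (hp : 0 < p) (hq : 0 < q)
    (hpq : p + q < 1) :
    ∃ C ≠ ⊤, IsBilinearBound μ μ
      (fun x y => ENNReal.ofReal (‖x - y‖ ^ (-((p + q) * finrank ℝ E)))) (1 - p) (1 - q) C := by
  obtain ⟨δ, hδ0, hδ⟩ : ∃ δ, 0 < δ ∧ δ < min p (min q (1 - p - q)) :=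
    exists_between (lt_min hp (lt_min hq (by linarith)))
  simp only [lt_min_iff] at hδ
  have hI := (lintegral_logDamped_one_lt_top μ hδ0).ne
  set I := ∫⁻ w, ENNReal.ofReal (logDamped δ 1 (‖w‖ ^ (-(finrank ℝ E : ℝ)))) ∂μ
  refine ⟨1 + I + I, by finiteness, .of_forall_pos_le (by linarith) (by linarith)
    (Φ := fun a x y => logDamped δ a (‖x - y‖ ^ (-(finrank ℝ E : ℝ))))
    (Ψ := fun b x y => logDamped δ b (‖x - y‖ ^ (-(finrank ℝ E : ℝ)))) (by fun_prop) (by fun_prop)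
    (.of_forall fun x => ?_)
    (.of_forall fun x a ha => (lintegral_logDamped_norm_sub μ δ x ha).le)
    (.of_forall fun y b hb => ?_)⟩
  · filter_upwards [Measure.ae_ne μ x] with y hy a b ha hb
    have hxy : 0 < ‖x - y‖ := norm_pos_iff.2 (sub_ne_zero.2 hy.symm)
    have hle := rpow_mul_rpow_mul_rpow_le_logDamped hδ0 hδ.1.le hδ.2.1.le hδ.2.2.le ha hb
      (D := ‖x - y‖ ^ (-(finrank ℝ E : ℝ))) (by positivity)
    rwa [← Real.rpow_mul hxy.le, neg_mul, mul_comm (finrank ℝ E : ℝ)] at hle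
  · simp_rw [norm_sub_rev _ y]
    exact (lintegral_logDamped_norm_sub μ δ y hb).le

end HardyLittlewoodSobolev

/-! ### The weighted kernel on the half space -/

/-- Points `(x, t)` of `ℝⁿ × ℝ`. -/
abbrev Point (n : ℕ) : Type := EuclideanSpace ℝ (Fin n) × ℝ

/-- Lebesgue measure on the upper half space, as a measure on `ℝⁿ × ℝ`. -/
abbrev halfVolume (n : ℕ) : Measure (Point n) := volume.restrict (upperHalf n)

section HalfSpace

variable {n : ℕ}

instance isAddHaarMeasure_volume_point : (volume : Measure (Point n)).IsAddHaarMeasure := by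
  rw [Measure.volume_eq_prod]
  infer_instance

lemma finrank_point : finrank ℝ (Point n) = n + 1 := by simp

lemma upperHalf_eq_univ_prod_Ioi : upperHalf n = Set.univ ×ˢ Set.Ioi 0 := by
  ext X
  simp [upperHalf]

lemma measurableSet_upperHalf : MeasurableSet (upperHalf n) := by
  rw [upperHalf_eq_univ_prod_Ioi]
  exact MeasurableSet.univ.prod measurableSet_Ioi

lemma ae_mem_upperHalf : ∀ᵐ X ∂(halfVolume n), X ∈ upperHalf n :=
  ae_restrict_mem measurableSet_upperHalf

/-- The part of the weighted kernel that dominates when the mutual distance of the points is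
comparable to their height: the distance is replaced by `|x - y| + t + z`. -/
def farWeight (a b l : ℝ) (X Y : Point n) : ℝ :=
  X.2 ^ a * Y.2 ^ b * (‖X.1 - Y.1‖ + X.2 + Y.2) ^ (-l)

@[fun_prop]
lemma measurable_farWeight (a b l : ℝ) {S : Type*} [MeasurableSpace S] {F G : S → Point n}
    (hF : Measurable F) (hG : Measurable G) : Measurable fun x => farWeight a b l (F x) (G x) := by
  unfold farWeight
  fun_prop

lemma farWeight_comm (a b l : ℝ) (X Y : Point n) : farWeight a b l X Y = farWeight b a l Y X := by
  rw [farWeight, farWeight, norm_sub_rev, mul_comm (X.2 ^ a), add_right_comm]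

lemma farWeight_pos (a b l : ℝ) {X Y : Point n} (hX : X ∈ upperHalf n) (hY : Y ∈ upperHalf n) :
    0 < farWeight a b l X Y := by
  have ht : 0 < X.2 := hX
  have hz : 0 < Y.2 := hY
  unfold farWeight
  positivity

lemma farWeight_rpow (a b l r : ℝ) {X Y : Point n} (hX : X ∈ upperHalf n) (hY : Y ∈ upperHalf n) :
    farWeight a b l X Y ^ r = farWeight (a * r) (b * r) (l * r) X Y := by
  have ht : 0 < X.2 := hX
  have hz : 0 < Y.2 := hY
  rw [farWeight, farWeight, Real.mul_rpow (by positivity) (by positivity),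
    Real.mul_rpow (by positivity) (by positivity), ← Real.rpow_mul ht.le, ← Real.rpow_mul hz.le,
    ← Real.rpow_mul (by positivity), neg_mul]

lemma farWeight_mul_div_rpow (a b l r : ℝ) {X Y : Point n} (hX : X ∈ upperHalf n)
    (hY : Y ∈ upperHalf n) :
    farWeight a b l X Y * (X.2 / Y.2) ^ r = farWeight (a + r) (b - r) l X Y := by
  have ht : 0 < X.2 := hX
  have hz : 0 < Y.2 := hY
  rw [farWeight, farWeight, Real.div_rpow ht.le hz.le, Real.rpow_add ht, Real.rpow_sub hz]
  ring

lemma rpow_mul_rpow_mul_rpow_le_weighted {p q A B D ρ : ℝ} (hp : 0 < p) (hq : 0 < q)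
    (hpq : p + q < 1) (hA : 0 < A) (hB : 0 < B) (hD : 0 < D) (hρ : 0 < ρ) :
    A ^ (1 - p) * B ^ (1 - q) * D ^ (p + q) ≤ A * B + A * (D * ρ ^ p) + B * (D * ρ ^ (-q)) := by
  have hgeom := Real.geom_mean_le_arith_mean3_weighted (w₁ := 1 - p - q) (w₂ := q) (w₃ := p)
    (p₁ := A * B) (p₂ := A * (D * ρ ^ p)) (p₃ := B * (D * ρ ^ (-q)))
    (by linarith) hq.le hp.le (by positivity) (by positivity) (by positivity) (by ring)
  have hprod : (A * B) ^ (1 - p - q) * (A * (D * ρ ^ p)) ^ q * (B * (D * ρ ^ (-q))) ^ p =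
      A ^ (1 - p) * B ^ (1 - q) * D ^ (p + q) := by
    have hρpq : ρ ^ (p * q) * ρ ^ (-q * p) = 1 := by
      rw [← Real.rpow_add hρ, neg_mul, mul_comm p, add_neg_cancel, Real.rpow_zero]
    rw [Real.mul_rpow hA.le hB.le, Real.mul_rpow hA.le (by positivity),
      Real.mul_rpow hD.le (by positivity), Real.mul_rpow hB.le (by positivity),
      Real.mul_rpow hD.le (by positivity), ← Real.rpow_mul hρ.le, ← Real.rpow_mul hρ.le,
      show A ^ (1 - p) = A ^ (1 - p - q) * A ^ q by rw [← Real.rpow_add hA]; ring_nf,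
      show B ^ (1 - q) = B ^ (1 - p - q) * B ^ p by rw [← Real.rpow_add hB]; ring_nf,
      Real.rpow_add hD]
    linear_combination (A ^ (1 - p - q) * A ^ q * B ^ (1 - p - q) * B ^ p * D ^ p * D ^ q) * hρpq
  have h₁ : 0 < A * B := by positivity
  have h₂ : 0 < A * (D * ρ ^ p) := by positivity
  have h₃ : 0 < B * (D * ρ ^ (-q)) := by positivity
  rw [hprod] at hgeom
  nlinarith

lemma setLIntegral_Ioi_rpow_mul_one_add_rpow_lt_top {c l : ℝ} (hc : c < 1) (hl : 0 ≤ l)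
    (hcl : 1 < c + l) :
    ∫⁻ z in Set.Ioi (0 : ℝ), ENNReal.ofReal (z ^ (-c) * (1 + z) ^ (-l)) < ⊤ := by
  rw [← Set.Ioc_union_Ioi_eq_Ioi zero_le_one]
  refine (lintegral_union_le _ _ _).trans_lt (ENNReal.add_lt_top.2 ⟨?_, ?_⟩)
  · have hint : IntegrableOn (fun z : ℝ => z ^ (-c)) (Set.Ioc 0 1) :=
      (intervalIntegrable_iff_integrableOn_Ioc_of_le zero_le_one).1
        (intervalIntegral.intervalIntegrable_rpow' (by linarith))
    refine lt_of_le_of_lt ?_ hint.lintegral_lt_top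
    refine setLIntegral_mono' measurableSet_Ioc fun z hz => ENNReal.ofReal_le_ofReal ?_
    have hz0 : 0 < z := hz.1
    exact mul_le_of_le_one_right (by positivity)
      (Real.rpow_le_one_of_one_le_of_nonpos (by linarith) (neg_nonpos.2 hl))
  · have hint := integrableOn_Ioi_rpow_of_lt (a := -c + -l) (by linarith) (zero_lt_one' ℝ)
    refine lt_of_le_of_lt ?_ hint.lintegral_lt_top
    refine setLIntegral_mono' measurableSet_Ioi fun z hz => ENNReal.ofReal_le_ofReal ?_
    have hz0 : 0 < z := zero_lt_one.trans hz
    rw [Real.rpow_add hz0]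
    gcongr z ^ (-c) * ?_
    exact Real.rpow_le_rpow_of_nonpos hz0 (by linarith) (by linarith)

lemma lintegral_farWeight_zero_one_lt_top {c l : ℝ} (hc : c < 1) (hl : n < l)
    (hcl : n + 1 < c + l) :
    ∫⁻ W, ENNReal.ofReal (farWeight 0 (-c) l ((0 : EuclideanSpace ℝ (Fin n)), (1 : ℝ)) W)
      ∂(halfVolume n) < ⊤ := by
  obtain ⟨η, hη0, hη⟩ : ∃ η, 0 < η ∧ η < min (l - n) (c + l - n - 1) :=
    exists_between (lt_min (sub_pos.2 hl) (by linarith))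
  rw [lt_min_iff] at hη
  have hnη : -(n + η) ≤ 0 := neg_nonpos.2 (by positivity)
  have hsplit : ∀ W ∈ upperHalf n,
      ENNReal.ofReal (farWeight 0 (-c) l ((0 : EuclideanSpace ℝ (Fin n)), (1 : ℝ)) W) ≤
        ENNReal.ofReal ((1 + ‖W.1‖) ^ (-(n + η))) *
          ENNReal.ofReal (W.2 ^ (-c) * (1 + W.2) ^ (-(l - n - η))) := by
    intro W (hW : 0 < W.2)
    rw [← ENNReal.ofReal_mul (by positivity), farWeight]
    apply ENNReal.ofReal_le_ofReal
    rw [Real.one_rpow, one_mul, zero_sub, norm_neg, show -l = -(n + η) + -(l - n - η) by ring,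
      Real.rpow_add (by positivity), mul_left_comm]
    gcongr ?_ * (_ * ?_)
    · exact Real.rpow_le_rpow_of_nonpos (by positivity) (by linarith) hnη
    · exact Real.rpow_le_rpow_of_nonpos (by positivity) (by linarith [norm_nonneg W.1])
        (by linarith)
  refine (setLIntegral_mono' measurableSet_upperHalf hsplit).trans_lt ?_
  rw [upperHalf_eq_univ_prod_Ioi, Measure.volume_eq_prod, ← Measure.prod_restrict,
    lintegral_prod_mul (f := fun y => ENNReal.ofReal ((1 + ‖y‖) ^ (-(n + η))))
      (g := fun z => ENNReal.ofReal (z ^ (-c) * (1 + z) ^ (-(l - n - η)))) (by fun_prop)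
      (by fun_prop), Measure.restrict_univ]
  exact ENNReal.mul_lt_top (finite_integral_one_add_norm (by simp; linarith))
    (setLIntegral_Ioi_rpow_mul_one_add_rpow_lt_top hc (by linarith) (by linarith))

lemma lintegral_farWeight {c l : ℝ} {X : Point n} (hX : X ∈ upperHalf n) :
    ∫⁻ Y, ENNReal.ofReal (farWeight (c + l - (n + 1)) (-c) l X Y) ∂(halfVolume n) =
      ∫⁻ W, ENNReal.ofReal (farWeight 0 (-c) l ((0 : EuclideanSpace ℝ (Fin n)), (1 : ℝ)) W)
        ∂(halfVolume n) := by
  have ht : 0 < X.2 := hX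
  rw [← lintegral_indicator measurableSet_upperHalf, ← lintegral_indicator measurableSet_upperHalf,
    lintegral_eq_mul_lintegral_comp_add_smul volume _ ((X.1, 0) : Point n) ht,
    ← lintegral_const_mul' _ _ ENNReal.ofReal_ne_top]
  refine lintegral_congr fun W => ?_
  have hmem : (X.1, 0) + X.2 • W ∈ upperHalf n ↔ W ∈ upperHalf n := by
    simp [upperHalf, mul_pos_iff_of_pos_left ht]
  by_cases hW : W ∈ upperHalf n
  swap
  · rw [Set.indicator_of_notMem hW, Set.indicator_of_notMem (hmem.not.2 hW), mul_zero]
  have hz : 0 < W.2 := hW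
  rw [Set.indicator_of_mem hW, Set.indicator_of_mem (hmem.2 hW),
    ← ENNReal.ofReal_mul (by positivity), finrank_point]
  congr 1
  simp only [farWeight, Prod.snd_add, Prod.smul_snd, smul_eq_mul, zero_add, Prod.fst_add,
    Prod.smul_fst, sub_add_cancel_left, zero_sub, norm_neg, norm_smul, Real.norm_of_nonneg ht.le]
  have hpow : X.2 ^ ((n + 1 : ℕ) : ℝ) * X.2 ^ (c + l - (n + 1)) * X.2 ^ (-c) * X.2 ^ (-l) = 1 := by
    rw [← Real.rpow_add ht, ← Real.rpow_add ht, ← Real.rpow_add ht]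
    push_cast
    rw [show (n : ℝ) + 1 + (c + l - (n + 1)) + -c + -l = 0 by ring, Real.rpow_zero]
  rw [show X.2 * ‖W.1‖ + X.2 + X.2 * W.2 = X.2 * (‖W.1‖ + 1 + W.2) by ring,
    Real.mul_rpow ht.le hz.le, Real.mul_rpow ht.le (by positivity), ← Real.rpow_natCast,
    Real.one_rpow]
  linear_combination (W.2 ^ (-c) * (‖W.1‖ + 1 + W.2) ^ (-l)) * hpow

lemma rpow_mul_rpow_mul_farWeight_le {p q s : ℝ} (α β lam : ℝ) (hp : 0 < p) (hq : 0 < q)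
    (hpq : p + q < 1) (hs : s * (p + q) = 1) {A B : ℝ} (hA : 0 < A) (hB : 0 < B)
    {X Y : Point n} (hX : X ∈ upperHalf n) (hY : Y ∈ upperHalf n) :
    A ^ (1 - p) * B ^ (1 - q) * farWeight (-α) (-β) lam X Y ≤
      A * B + A * farWeight (s * (p - α)) (-(s * (p + β))) (s * lam) X Y +
        B * farWeight (-(s * (q + α))) (s * (q - β)) (s * lam) X Y := by
  have ht : 0 < X.2 := hX
  have hz : 0 < Y.2 := hY
  have hle := rpow_mul_rpow_mul_rpow_le_weighted (ρ := (X.2 / Y.2) ^ s) hp hq hpq hA hB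
    (farWeight_pos (-(s * α)) (-(s * β)) (s * lam) hX hY) (by positivity)
  rw [farWeight_rpow _ _ _ _ hX hY, ← Real.rpow_mul (by positivity),
    ← Real.rpow_mul (by positivity), farWeight_mul_div_rpow _ _ _ _ hX hY,
    farWeight_mul_div_rpow _ _ _ _ hX hY] at hle
  have hα_scale : -(s * α) * (p + q) = -α := by linear_combination (-α) * hs
  have hβ_scale : -(s * β) * (p + q) = -β := by linear_combination (-β) * hs
  have hlam_scale : s * lam * (p + q) = lam := by linear_combination lam * hs
  rw [hα_scale, hβ_scale, hlam_scale] at hle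
  convert hle using 5 <;> ring

lemma exists_isBilinearBound_farWeight {p q α β lam : ℝ} (hp : 0 < p) (hq : 0 < q)
    (hpq : p + q < 1) (hbal : (p + q) * (n + 1) = α + β + lam) (hα : α < p) (hβ : β < q) :
    ∃ C ≠ ⊤, IsBilinearBound (halfVolume n) (halfVolume n)
      (fun X Y => ENNReal.ofReal (farWeight (-α) (-β) lam X Y)) (1 - p) (1 - q) C := by
  set s := (p + q)⁻¹
  have hs0 : 0 < s := by positivity
  have hs : s * (p + q) = 1 := inv_mul_cancel₀ (by positivity)
  have hnl : n < s * lam := by nlinarith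
  have hsp : 0 < s * (p - α) := mul_pos hs0 (sub_pos.2 hα)
  have hsq : 0 < s * (q - β) := mul_pos hs0 (sub_pos.2 hβ)
  have hp_scale : s * (p - α) = s * (p + β) + s * lam - (n + 1) := by
    linear_combination s * hbal - ((n : ℝ) + 1) * hs
  have hq_scale : s * (q - β) = s * (q + α) + s * lam - (n + 1) := by
    linear_combination s * hbal - ((n : ℝ) + 1) * hs
  have hI := (lintegral_farWeight_zero_one_lt_top (n := n) (c := s * (p + β)) (l := s * lam)
    (by linarith) hnl (by linarith)).ne
  have hJ := (lintegral_farWeight_zero_one_lt_top (n := n) (c := s * (q + α)) (l := s * lam)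
    (by linarith) hnl (by linarith)).ne
  refine ⟨_, ENNReal.add_ne_top.2 ⟨ENNReal.add_ne_top.2 ⟨one_ne_top, hI⟩, hJ⟩,
    .of_forall_pos_le (by linarith) (by linarith)
    (Φ := fun _ => farWeight (s * (p - α)) (-(s * (p + β))) (s * lam))
    (Ψ := fun _ => farWeight (-(s * (q + α))) (s * (q - β)) (s * lam)) (by fun_prop) (by fun_prop)
    ?_ (ae_mem_upperHalf.mono fun X hX _ _ => ?_) (ae_mem_upperHalf.mono fun Y hY _ _ => ?_)⟩
  · filter_upwards [ae_mem_upperHalf] with X hX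
    filter_upwards [ae_mem_upperHalf] with Y hY a b ha hb
    exact rpow_mul_rpow_mul_farWeight_le α β lam hp hq hpq hs ha hb hX hY
  · rw [hp_scale, lintegral_farWeight hX]
  · simp_rw [farWeight_comm _ _ _ _ Y]
    rw [hq_scale, lintegral_farWeight hY]

lemma hsDist_comm (X Y : Point n) : hsDist X Y = hsDist Y X := by
  rw [hsDist, hsDist, norm_sub_rev, sub_sq_comm]

lemma norm_fst_sub_le_hsDist (X Y : Point n) : ‖X.1 - Y.1‖ ≤ hsDist X Y :=
  Real.le_sqrt_of_sq_le (le_add_of_nonneg_right (sq_nonneg _))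

lemma abs_snd_sub_le_hsDist (X Y : Point n) : |X.2 - Y.2| ≤ hsDist X Y :=
  Real.abs_le_sqrt (le_add_of_nonneg_left (sq_nonneg _))

lemma norm_sub_le_hsDist (X Y : Point n) : ‖X - Y‖ ≤ hsDist X Y :=
  max_le (norm_fst_sub_le_hsDist X Y) (abs_snd_sub_le_hsDist X Y)

lemma hsDist_pos {X Y : Point n} (hXY : X ≠ Y) : 0 < hsDist X Y :=
  (norm_pos_iff.2 (sub_ne_zero.2 hXY)).trans_le (norm_sub_le_hsDist X Y)

/-- The kernel `t ^ (-α) * |X - Y| ^ (-λ) * z ^ (-β)` of the integral system, for `X = (x, t)` and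
`Y = (y, z)`. -/
def weightedKernel (α β lam : ℝ) (X Y : Point n) : ℝ≥0∞ :=
  ENNReal.ofReal (X.2 ^ (-α)) * ENNReal.ofReal (Y.2 ^ (-β)) * ENNReal.ofReal (hsDist X Y) ^ (-lam)

lemma weightedKernel_comm (α β lam : ℝ) (X Y : Point n) :
    weightedKernel α β lam X Y = weightedKernel β α lam Y X := by
  rw [weightedKernel, weightedKernel, hsDist_comm, mul_comm (ENNReal.ofReal (X.2 ^ (-α)))]

@[fun_prop]
lemma measurable_weightedKernel (α β lam : ℝ) {S : Type*} [MeasurableSpace S] {F G : S → Point n}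
    (hF : Measurable F) (hG : Measurable G) :
    Measurable fun x => weightedKernel α β lam (F x) (G x) := by
  unfold weightedKernel hsDist
  fun_prop

lemma weightedKernel_eq_ofReal (α β lam : ℝ) {X Y : Point n} (hX : X ∈ upperHalf n)
    (hY : Y ∈ upperHalf n) (hXY : X ≠ Y) :
    weightedKernel α β lam X Y =
      ENNReal.ofReal (X.2 ^ (-α) * Y.2 ^ (-β) * hsDist X Y ^ (-lam)) := by
  have ht : 0 < X.2 := hX
  have hz : 0 < Y.2 := hY
  rw [weightedKernel, ENNReal.ofReal_rpow_of_pos (hsDist_pos hXY),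
    ENNReal.ofReal_mul (by positivity), ENNReal.ofReal_mul (by positivity)]

lemma rpow_neg_le_two_rpow_mul {M t : ℝ} (a : ℝ) (hM : 0 < M) (hMt : M ≤ 2 * t) (htM : t ≤ M) :
    t ^ (-a) ≤ 2 ^ |a| * M ^ (-a) := by
  have ht : 0 < t := by linarith
  rcases le_total 0 a with ha | ha
  · calc t ^ (-a) ≤ (2⁻¹ * M) ^ (-a) :=
          Real.rpow_le_rpow_of_nonpos (by positivity) (by linarith) (by linarith)
      _ = 2 ^ |a| * M ^ (-a) := by
          rw [Real.mul_rpow (by positivity) hM.le, abs_of_nonneg ha,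
            Real.inv_rpow zero_le_two, Real.rpow_neg zero_le_two, inv_inv]
  · calc t ^ (-a) ≤ M ^ (-a) := Real.rpow_le_rpow ht.le htM (by linarith)
      _ ≤ 2 ^ |a| * M ^ (-a) :=
          le_mul_of_one_le_left (by positivity) (Real.one_le_rpow one_le_two (abs_nonneg a))

lemma rpow_mul_hsDist_rpow_le_norm_sub_rpow {α β lam : ℝ} (hαβ : 0 ≤ α + β) (hlam : 0 ≤ lam)
    {X Y : Point n} (hX : X ∈ upperHalf n) (hXY : X ≠ Y)
    (hdist : 2 * hsDist X Y ≤ max X.2 Y.2) :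
    X.2 ^ (-α) * Y.2 ^ (-β) * hsDist X Y ^ (-lam) ≤
      2 ^ (|α| + |β|) * ‖X - Y‖ ^ (-(α + β + lam)) := by
  have ht : 0 < X.2 := hX
  have hN : 0 < ‖X - Y‖ := norm_pos_iff.2 (sub_ne_zero.2 hXY)
  have hdN := norm_sub_le_hsDist X Y
  have hd := abs_le.1 (abs_snd_sub_le_hsDist X Y)
  set d := hsDist X Y
  obtain ⟨hXM, hYM⟩ : X.2 ≤ max X.2 Y.2 ∧ Y.2 ≤ max X.2 Y.2 := ⟨le_max_left _ _, le_max_right _ _⟩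
  obtain ⟨hMX, hMY⟩ : max X.2 Y.2 ≤ 2 * X.2 ∧ max X.2 Y.2 ≤ 2 * Y.2 := by
    rcases max_choice X.2 Y.2 with h | h <;> rw [h] at hdist ⊢ <;> constructor <;> linarith
  set M := max X.2 Y.2
  have hM : 0 < M := ht.trans_le hXM
  have hz : 0 < Y.2 := by linarith
  calc X.2 ^ (-α) * Y.2 ^ (-β) * d ^ (-lam)
      ≤ 2 ^ |α| * M ^ (-α) * (2 ^ |β| * M ^ (-β)) * ‖X - Y‖ ^ (-lam) := by
        have hd0 : 0 ≤ d := hN.le.trans hdN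
        gcongr ?_ * ?_ * ?_
        · exact rpow_neg_le_two_rpow_mul α hM hMX hXM
        · exact rpow_neg_le_two_rpow_mul β hM hMY hYM
        · exact Real.rpow_le_rpow_of_nonpos hN hdN (neg_nonpos.2 hlam)
    _ = 2 ^ (|α| + |β|) * (M ^ (-(α + β)) * ‖X - Y‖ ^ (-lam)) := by
        rw [Real.rpow_add zero_lt_two, neg_add, Real.rpow_add hM]
        ring
    _ ≤ 2 ^ (|α| + |β|) * (‖X - Y‖ ^ (-(α + β)) * ‖X - Y‖ ^ (-lam)) := by
        gcongr ?_ * (?_ * _)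
        exact Real.rpow_le_rpow_of_nonpos hN (by linarith) (by linarith)
    _ = 2 ^ (|α| + |β|) * ‖X - Y‖ ^ (-(α + β + lam)) := by
        rw [← Real.rpow_add hN, neg_add _ lam]

lemma rpow_mul_hsDist_rpow_le_farWeight (α β : ℝ) {lam : ℝ} (hlam : 0 ≤ lam) {X Y : Point n}
    (hX : X ∈ upperHalf n) (hY : Y ∈ upperHalf n) (hXY : X ≠ Y)
    (hdist : max X.2 Y.2 ≤ 2 * hsDist X Y) :
    X.2 ^ (-α) * Y.2 ^ (-β) * hsDist X Y ^ (-lam) ≤ 5 ^ lam * farWeight (-α) (-β) lam X Y := by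
  have ht : 0 < X.2 := hX
  have hz : 0 < Y.2 := hY
  have hd := hsDist_pos hXY
  have hsum : ‖X.1 - Y.1‖ + X.2 + Y.2 ≤ 5 * hsDist X Y := by
    linarith [norm_fst_sub_le_hsDist X Y, le_max_left X.2 Y.2, le_max_right X.2 Y.2]
  calc X.2 ^ (-α) * Y.2 ^ (-β) * hsDist X Y ^ (-lam)
      = 5 ^ lam * (X.2 ^ (-α) * Y.2 ^ (-β) * (5 * hsDist X Y) ^ (-lam)) := by
        rw [Real.mul_rpow (by norm_num) hd.le, mul_left_comm, ← mul_assoc (5 ^ lam),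
          ← Real.rpow_add (by norm_num), add_neg_cancel, Real.rpow_zero, one_mul]
    _ ≤ 5 ^ lam * farWeight (-α) (-β) lam X Y := by
        unfold farWeight
        gcongr _ * (_ * ?_)
        exact Real.rpow_le_rpow_of_nonpos (by positivity) hsum (by linarith)

lemma weightedKernel_le {α β lam : ℝ} (hαβ : 0 ≤ α + β) (hlam : 0 ≤ lam) {X Y : Point n}
    (hX : X ∈ upperHalf n) (hY : Y ∈ upperHalf n) (hXY : X ≠ Y) :
    weightedKernel α β lam X Y ≤ ENNReal.ofReal (2 ^ (|α| + |β|) + 5 ^ lam) *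
      (ENNReal.ofReal (‖X - Y‖ ^ (-(α + β + lam))) +
        ENNReal.ofReal (farWeight (-α) (-β) lam X Y)) := by
  have hfar := farWeight_pos (-α) (-β) lam hX hY
  rw [weightedKernel_eq_ofReal α β lam hX hY hXY, ← ENNReal.ofReal_add (by positivity) hfar.le,
    ← ENNReal.ofReal_mul (by positivity)]
  refine ENNReal.ofReal_le_ofReal ?_
  rcases le_total (2 * hsDist X Y) (max X.2 Y.2) with hdist | hdist
  · refine (rpow_mul_hsDist_rpow_le_norm_sub_rpow hαβ hlam hX hXY hdist).trans ?_
    gcongr ?_ * ?_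
    · exact le_add_of_nonneg_right (by positivity)
    · exact le_add_of_nonneg_right hfar.le
  · refine (rpow_mul_hsDist_rpow_le_farWeight α β hlam hX hY hXY hdist).trans ?_
    gcongr ?_ * ?_
    · exact le_add_of_nonneg_left (by positivity)
    · exact le_add_of_nonneg_left (by positivity)

theorem exists_isBilinearBound_weightedKernel {p q α β lam : ℝ} (hp : 0 < p) (hq : 0 < q)
    (hpq : p + q < 1) (hbal : (p + q) * (n + 1) = α + β + lam) (hα : α < p) (hβ : β < q)
    (hαβ : 0 ≤ α + β) (hlam : 0 ≤ lam) :
    ∃ C ≠ ⊤, IsBilinearBound (halfVolume n) (halfVolume n) (weightedKernel α β lam)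
      (1 - p) (1 - q) C := by
  obtain ⟨C₁, hC₁, hnear⟩ :=
    exists_isBilinearBound_norm_sub_rpow (volume : Measure (Point n)) hp hq hpq
  obtain ⟨C₂, hC₂, hfar⟩ := exists_isBilinearBound_farWeight hp hq hpq hbal hα hβ
  refine ⟨ENNReal.ofReal (2 ^ (|α| + |β|) + 5 ^ lam) * (C₁ + C₂), by finiteness,
    .of_le_add ENNReal.ofReal_ne_top
    (hnear.restrict (by linarith) (by linarith) measurableSet_upperHalf measurableSet_upperHalf)
    hfar (by fun_prop) ?_⟩
  filter_upwards [ae_mem_upperHalf] with X hX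
  filter_upwards [ae_mem_upperHalf, ae_restrict_of_ae (Measure.ae_ne volume X)] with Y hY hYX
  rw [finrank_point, Nat.cast_succ, hbal]
  exact weightedKernel_le hαβ hlam hX hY hYX.symm

end HalfSpace

/-! ### Potentials and the Euler–Lagrange system -/

section MeasurableRepresentative

variable {S : Type*} [MeasurableSpace S] {μ : Measure S}

lemma exists_measurable_le_lintegral_mul_eq {K : S → ℝ≥0∞} (hK : Measurable K)
    (hK0 : ∀ᵐ y ∂μ, K y ≠ 0) (hK_top : ∀ᵐ y ∂μ, K y ≠ ⊤) (f : S → ℝ≥0∞) :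
    ∃ g, Measurable g ∧ g ≤ f ∧ ∫⁻ y, f y * K y ∂μ = ∫⁻ y, g y * K y ∂μ := by
  obtain ⟨F, hF, hFle, hFint⟩ := exists_measurable_le_lintegral_eq μ fun y => f y * K y
  refine ⟨fun y => F y / K y, hF.div hK, fun y => ENNReal.div_le_of_le_mul (hFle y), ?_⟩
  rw [hFint]
  refine lintegral_congr_ae ?_
  filter_upwards [hK0, hK_top] with y hy0 hy_top
  rw [ENNReal.div_mul_cancel hy0 hy_top]

/-- The measurable minorant of `f` that is optimal for a single kernel is optimal for all. -/
lemma exists_measurable_forall_lintegral_mul_eq {ι : Type*} {K : ι → S → ℝ≥0∞}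
    (hK : ∀ i, Measurable (K i)) (hK0 : ∀ i, ∀ᵐ y ∂μ, K i y ≠ 0)
    (hK_top : ∀ i, ∀ᵐ y ∂μ, K i y ≠ ⊤) {f : S → ℝ≥0∞} {i₀ : ι}
    (hf : ∫⁻ y, f y * K i₀ y ∂μ ≠ ⊤) :
    ∃ g, Measurable g ∧ ∀ i, ∫⁻ y, f y * K i y ∂μ = ∫⁻ y, g y * K i y ∂μ := by
  obtain ⟨g, hg, hgf, hg_int⟩ :=
    exists_measurable_le_lintegral_mul_eq (hK i₀) (hK0 i₀) (hK_top i₀) f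
  refine ⟨g, hg, fun i => le_antisymm ?_ (lintegral_mono fun y => mul_le_mul_left (hgf y) _)⟩
  obtain ⟨G, hG, hGf, hG_int⟩ := exists_measurable_le_lintegral_mul_eq (hK i) (hK0 i) (hK_top i) f
  have hmax : (fun y => g y * K i₀ y) =ᵐ[μ] fun y => max (g y) (G y) * K i₀ y := by
    refine ae_eq_of_ae_le_of_lintegral_le
      (.of_forall fun y => mul_le_mul_left (le_max_left _ _) _) (hg_int ▸ hf)
      ((hg.max hG).mul (hK i₀)).aemeasurable ?_
    rw [← hg_int]
    exact lintegral_mono fun y => mul_le_mul_left (max_le (hgf y) (hGf y)) _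
  rw [hG_int]
  refine lintegral_mono_ae ?_
  filter_upwards [hmax, hK0 i₀, hK_top i₀] with y hy hy0 hy_top
  rw [ENNReal.mul_left_inj hy0 hy_top] at hy
  exact mul_le_mul_left (hy ▸ le_max_right _ _) _

end MeasurableRepresentative

section Potential

variable {n : ℕ}

lemma weightedKernel_ne_zero (α β : ℝ) {lam : ℝ} (hlam : 0 ≤ lam) {X Y : Point n}
    (hX : X ∈ upperHalf n) (hY : Y ∈ upperHalf n) : weightedKernel α β lam X Y ≠ 0 := by
  have ht : 0 < X.2 := hX
  have hz : 0 < Y.2 := hY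
  refine mul_ne_zero (mul_ne_zero ?_ ?_) ?_
  · exact (ENNReal.ofReal_pos.2 (by positivity)).ne'
  · exact (ENNReal.ofReal_pos.2 (by positivity)).ne'
  · simp [ENNReal.rpow_eq_zero_iff, hlam]

lemma weightedKernel_ne_top (α β lam : ℝ) {X Y : Point n} (hX : X ∈ upperHalf n)
    (hY : Y ∈ upperHalf n) (hXY : X ≠ Y) : weightedKernel α β lam X Y ≠ ⊤ := by
  rw [weightedKernel_eq_ofReal α β lam hX hY hXY]
  exact ENNReal.ofReal_ne_top

lemma ae_weightedKernel_ne_zero (α β : ℝ) {lam : ℝ} (hlam : 0 ≤ lam) {X : Point n}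
    (hX : X ∈ upperHalf n) : ∀ᵐ Y ∂(halfVolume n), weightedKernel α β lam X Y ≠ 0 :=
  ae_mem_upperHalf.mono fun _ hY => weightedKernel_ne_zero α β hlam hX hY

lemma ae_weightedKernel_ne_top (α β lam : ℝ) {X : Point n} (hX : X ∈ upperHalf n) :
    ∀ᵐ Y ∂(halfVolume n), weightedKernel α β lam X Y ≠ ⊤ := by
  filter_upwards [ae_mem_upperHalf, ae_restrict_of_ae (Measure.ae_ne volume X)] with Y hY hYX
  exact weightedKernel_ne_top α β lam hX hY hYX.symm

lemma upperHalf_mem_nhds {X : Point n} (hX : X ∈ upperHalf n) : upperHalf n ∈ 𝓝 X :=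
  (isOpen_lt continuous_const continuous_snd).mem_nhds hX

lemma tendsto_weightedKernel_left (α β lam : ℝ) {X Y : Point n} (hX : X ∈ upperHalf n)
    (hY : Y ∈ upperHalf n) :
    Tendsto (fun Z => weightedKernel α β lam Z Y) (𝓝 X) (𝓝 (weightedKernel α β lam X Y)) := by
  have ht : 0 < X.2 := hX
  have hz : 0 < Y.2 := hY
  have htα : ENNReal.ofReal (X.2 ^ (-α)) ≠ 0 := (ENNReal.ofReal_pos.2 (by positivity)).ne'
  have hzβ : ENNReal.ofReal (Y.2 ^ (-β)) ≠ 0 := (ENNReal.ofReal_pos.2 (by positivity)).ne'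
  refine ENNReal.Tendsto.mul (ENNReal.Tendsto.mul_const ?_ (Or.inr ENNReal.ofReal_ne_top))
    (Or.inl (mul_ne_zero htα hzβ)) ?_ (Or.inr (by finiteness))
  · exact ENNReal.tendsto_ofReal ((continuous_snd.tendsto X).rpow_const (Or.inl ht.ne'))
  · refine (ENNReal.continuous_rpow_const.comp (ENNReal.continuous_ofReal.comp ?_)).tendsto X
    unfold hsDist
    fun_prop

/-- The weighted potential `X ↦ ∫ f(Y) K(X, Y) dY` over the upper half space. -/
def potential (α β lam : ℝ) (f : Point n → ℝ≥0∞) (X : Point n) : ℝ≥0∞ :=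
  ∫⁻ Y, f Y * weightedKernel α β lam X Y ∂(halfVolume n)

lemma measurable_potential (α β lam : ℝ) {f : Point n → ℝ≥0∞} (hf : Measurable f) :
    Measurable (potential α β lam f) :=
  Measurable.lintegral_prod_right'
    (f := fun Z : Point n × Point n => f Z.2 * weightedKernel α β lam Z.1 Z.2) (by fun_prop)

lemma potential_congr_ae {α β lam : ℝ} {f g : Point n → ℝ≥0∞} (hfg : f =ᵐ[halfVolume n] g)
    (X : Point n) : potential α β lam f X = potential α β lam g X :=
  lintegral_congr_ae (hfg.mono fun Y hY => by simp only [hY])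

lemma lintegral_mul_potential (α β lam : ℝ) {f g : Point n → ℝ≥0∞} (hf : Measurable f)
    (hg : Measurable g) :
    ∫⁻ X, f X * potential α β lam g X ∂(halfVolume n) =
      ∫⁻ Y, g Y * potential β α lam f Y ∂(halfVolume n) := by
  calc ∫⁻ X, f X * potential α β lam g X ∂(halfVolume n)
      = ∫⁻ X, ∫⁻ Y, f X * (g Y * weightedKernel α β lam X Y) ∂(halfVolume n) ∂(halfVolume n) :=
        lintegral_congr fun X => (lintegral_const_mul _ (by fun_prop)).symm
    _ = ∫⁻ Y, ∫⁻ X, f X * (g Y * weightedKernel α β lam X Y) ∂(halfVolume n) ∂(halfVolume n) :=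
        lintegral_lintegral_swap (by fun_prop)
    _ = ∫⁻ Y, ∫⁻ X, g Y * (f X * weightedKernel β α lam Y X) ∂(halfVolume n) ∂(halfVolume n) := by
        simp only [weightedKernel_comm α β, mul_left_comm]
    _ = ∫⁻ Y, g Y * potential β α lam f Y ∂(halfVolume n) :=
        lintegral_congr fun Y => lintegral_const_mul _ (by fun_prop)

lemma lowerSemicontinuousAt_potential (α β : ℝ) {lam : ℝ} (hlam : 0 ≤ lam) {f : Point n → ℝ≥0∞}
    (hf : Measurable f) {X : Point n} (hX : X ∈ upperHalf n) :
    LowerSemicontinuousAt (potential α β lam f) X := by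
  intro c hc
  have hFatou := lintegral_liminf_le (μ := halfVolume n) (u := 𝓝 X)
    (f := fun Z Y => f Y * weightedKernel α β lam Z Y) (fun Z => by fun_prop)
  refine eventually_lt_of_lt_liminf (hc.trans_le (le_of_eq_of_le ?_ hFatou))
  refine setLIntegral_congr_fun measurableSet_upperHalf fun Y hY => ?_
  exact (ENNReal.Tendsto.const_mul (tendsto_weightedKernel_left α β lam hX hY)
    (Or.inl (weightedKernel_ne_zero α β hlam hX hY))).liminf_eq.symm

lemma measurable_of_eq_potential {α β lam : ℝ} (hlam : 0 ≤ lam) {U f : Point n → ℝ≥0∞}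
    (hU_top : ∀ X, U X ≠ ⊤) (hU_zero : ∀ X ∉ upperHalf n, U X = 0)
    (hU_eq : ∀ X ∈ upperHalf n, U X = potential α β lam f X) : Measurable U := by
  have hX₀ : ((0, 1) : Point n) ∈ upperHalf n := show (0 : ℝ) < 1 from one_pos
  obtain ⟨g, hg, hfg⟩ := exists_measurable_forall_lintegral_mul_eq (μ := halfVolume n)
    (K := fun X : upperHalf n => weightedKernel α β lam X) (fun X => by fun_prop)
    (fun X => ae_weightedKernel_ne_zero α β hlam X.2)
    (fun X => ae_weightedKernel_ne_top α β lam X.2) (f := f) (i₀ := ⟨_, hX₀⟩)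
    (ne_of_eq_of_ne (hU_eq _ hX₀).symm (hU_top _))
  have hU : U = (upperHalf n).indicator (potential α β lam g) := by
    ext X
    by_cases hX : X ∈ upperHalf n
    · rw [Set.indicator_of_mem hX, hU_eq X hX]
      exact hfg ⟨X, hX⟩
    · rw [Set.indicator_of_notMem hX, hU_zero X hX]
  rw [hU]
  exact (measurable_potential α β lam hg).indicator measurableSet_upperHalf

end Potential

section EulerLagrange

variable {n : ℕ} {lam κ θ α β : ℝ} {U V : Point n → ℝ≥0∞}

/-- A positive, finite-energy solution `(U, V)` of the Euler–Lagrange integral system with positive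
exponents. The functions are total and `[0, ∞]`-valued; only their values on the upper half space
are constrained by the equations. -/
structure IsEulerLagrangePair (lam κ θ α β : ℝ) (U V : Point n → ℝ≥0∞) : Prop where
  lam_pos : 0 < lam
  κ_pos : 0 < κ
  θ_pos : 0 < θ
  measurable_fst : Measurable U
  measurable_snd : Measurable V
  fst_ne_top : ∀ X, U X ≠ ⊤
  snd_ne_top : ∀ X, V X ≠ ⊤
  fst_ne_zero : ∀ X ∈ upperHalf n, U X ≠ 0
  snd_ne_zero : ∀ X ∈ upperHalf n, V X ≠ 0
  fst_eq : ∀ X ∈ upperHalf n, U X = potential α β lam (fun Y => V Y ^ κ) X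
  snd_eq : ∀ X ∈ upperHalf n, V X = potential β α lam (fun Y => U Y ^ θ) X
  energy_ne_top : ∫⁻ X, U X ^ (θ + 1) ∂(halfVolume n) ≠ ⊤

namespace IsEulerLagrangePair

lemma lintegral_rpow_mul_potential (h : IsEulerLagrangePair lam κ θ α β U V) :
    ∫⁻ X, U X ^ θ * potential α β lam (fun Y => V Y ^ κ) X ∂(halfVolume n) =
      ∫⁻ X, U X ^ (θ + 1) ∂(halfVolume n) := by
  refine setLIntegral_congr_fun measurableSet_upperHalf fun X hX => ?_
  simp only [← h.fst_eq X hX, ENNReal.rpow_add_of_nonneg _ _ h.θ_pos.le zero_le_one,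
    ENNReal.rpow_one]

lemma energy_eq (h : IsEulerLagrangePair lam κ θ α β U V) :
    ∫⁻ X, U X ^ (θ + 1) ∂(halfVolume n) = ∫⁻ X, V X ^ (κ + 1) ∂(halfVolume n) := by
  calc ∫⁻ X, U X ^ (θ + 1) ∂(halfVolume n)
      = ∫⁻ X, U X ^ θ * potential α β lam (fun Y => V Y ^ κ) X ∂(halfVolume n) :=
        h.lintegral_rpow_mul_potential.symm
    _ = ∫⁻ Y, V Y ^ κ * potential β α lam (fun X => U X ^ θ) Y ∂(halfVolume n) :=
        lintegral_mul_potential α β lam (h.measurable_fst.pow_const θ)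
          (h.measurable_snd.pow_const κ)
    _ = ∫⁻ X, V X ^ (κ + 1) ∂(halfVolume n) := by
        refine setLIntegral_congr_fun measurableSet_upperHalf fun X hX => ?_
        simp only [← h.snd_eq X hX, ENNReal.rpow_add_of_nonneg _ _ h.κ_pos.le zero_le_one,
          ENNReal.rpow_one]

lemma swap (h : IsEulerLagrangePair lam κ θ α β U V) : IsEulerLagrangePair lam θ κ β α V U where
  lam_pos := h.lam_pos
  κ_pos := h.θ_pos
  θ_pos := h.κ_pos
  measurable_fst := h.measurable_snd
  measurable_snd := h.measurable_fst
  fst_ne_top := h.snd_ne_top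
  snd_ne_top := h.fst_ne_top
  fst_ne_zero := h.snd_ne_zero
  snd_ne_zero := h.fst_ne_zero
  fst_eq := h.snd_eq
  snd_eq := h.fst_eq
  energy_ne_top := h.energy_eq ▸ h.energy_ne_top

lemma lowerSemicontinuousAt (h : IsEulerLagrangePair lam κ θ α β U V) {X : Point n}
    (hX : X ∈ upperHalf n) : LowerSemicontinuousAt U X := by
  intro c hc
  rw [h.fst_eq X hX] at hc
  filter_upwards [upperHalf_mem_nhds hX, lowerSemicontinuousAt_potential α β h.lam_pos.le
    (h.measurable_snd.pow_const κ) hX c hc] with Z hZ hcZ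
  rwa [h.fst_eq Z hZ]

end IsEulerLagrangePair

lemma ofReal_rpow_mul_lintegral_eq_potential (α β lam κ : ℝ) {v : Point n → ℝ}
    (hv : ∀ X ∈ upperHalf n, 0 < v X) (X : Point n) :
    ENNReal.ofReal (X.2 ^ (-α)) * ∫⁻ Y in upperHalf n, ENNReal.ofReal (v Y ^ κ) *
        ENNReal.ofReal (Y.2 ^ (-β)) * ENNReal.ofReal (hsDist X Y) ^ (-lam) =
      potential α β lam
        (fun Y => (upperHalf n).indicator (fun Y => ENNReal.ofReal (v Y)) Y ^ κ) X := by
  rw [← lintegral_const_mul' _ _ ENNReal.ofReal_ne_top]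
  refine setLIntegral_congr_fun measurableSet_upperHalf fun Y hY => ?_
  simp only [Set.indicator_of_mem hY, ENNReal.ofReal_rpow_of_pos (hv Y hY), weightedKernel]
  ring

lemma isEulerLagrangePair_indicator (hlam : 0 < lam) (hκ : 0 < κ) (hθ : 0 < θ)
    {u v : Point n → ℝ} (hu_pos : ∀ X ∈ upperHalf n, 0 < u X) (hv_pos : ∀ X ∈ upperHalf n, 0 < v X)
    (hu_eq : ∀ X ∈ upperHalf n, ENNReal.ofReal (u X) = ENNReal.ofReal (X.2 ^ (-α)) *
      ∫⁻ Y in upperHalf n, ENNReal.ofReal (v Y ^ κ) * ENNReal.ofReal (Y.2 ^ (-β)) *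
        ENNReal.ofReal (hsDist X Y) ^ (-lam))
    (hv_eq : ∀ Y ∈ upperHalf n, ENNReal.ofReal (v Y) = ENNReal.ofReal (Y.2 ^ (-β)) *
      ∫⁻ X in upperHalf n, ENNReal.ofReal (u X ^ θ) * ENNReal.ofReal (X.2 ^ (-α)) *
        ENNReal.ofReal (hsDist X Y) ^ (-lam))
    (hu_int : ∫⁻ X in upperHalf n, ENNReal.ofReal (u X ^ (θ + 1)) < ⊤) :
    IsEulerLagrangePair lam κ θ α β ((upperHalf n).indicator fun X => ENNReal.ofReal (u X))
      ((upperHalf n).indicator fun X => ENNReal.ofReal (v X)) := by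
  have hne_top (w : Point n → ℝ) (X : Point n) :
      (upperHalf n).indicator (fun X => ENNReal.ofReal (w X)) X ≠ ⊤ :=
    ((Set.indicator_le_self _ _ X).trans_lt ENNReal.ofReal_lt_top).ne
  have hne_zero {w : Point n → ℝ} (hw : ∀ X ∈ upperHalf n, 0 < w X) (X : Point n)
      (hX : X ∈ upperHalf n) : (upperHalf n).indicator (fun X => ENNReal.ofReal (w X)) X ≠ 0 := by
    rw [Set.indicator_of_mem hX]
    exact (ENNReal.ofReal_pos.2 (hw X hX)).ne'
  have hU_eq : ∀ X ∈ upperHalf n, (upperHalf n).indicator (fun X => ENNReal.ofReal (u X)) X =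
      potential α β lam
        (fun Y => (upperHalf n).indicator (fun Y => ENNReal.ofReal (v Y)) Y ^ κ) X := fun X hX => by
    rw [← ofReal_rpow_mul_lintegral_eq_potential α β lam κ hv_pos, ← hu_eq X hX,
      Set.indicator_of_mem hX]
  have hV_eq : ∀ X ∈ upperHalf n, (upperHalf n).indicator (fun X => ENNReal.ofReal (v X)) X =
      potential β α lam
        (fun Y => (upperHalf n).indicator (fun Y => ENNReal.ofReal (u Y)) Y ^ θ) X := fun X hX => by
    rw [← ofReal_rpow_mul_lintegral_eq_potential β α lam θ hu_pos, Set.indicator_of_mem hX,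
      hv_eq X hX]
    simp_rw [hsDist_comm X]
  have hmeas {w : Point n → ℝ} {a b : ℝ} {f : Point n → ℝ≥0∞} :=
    measurable_of_eq_potential (α := a) (β := b) (f := f) hlam.le (hne_top w)
      (fun X hX => Set.indicator_of_notMem hX _)
  refine ⟨hlam, hκ, hθ, hmeas hU_eq, hmeas hV_eq, hne_top u, hne_top v, hne_zero hu_pos,
    hne_zero hv_pos, hU_eq, hV_eq, (lt_of_eq_of_lt ?_ hu_int).ne⟩
  refine setLIntegral_congr_fun measurableSet_upperHalf fun Y hY => ?_
  simp only [Set.indicator_of_mem hY, ENNReal.ofReal_rpow_of_pos (hu_pos Y hY)]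

end EulerLagrange

/-! ### Reflections and polarization -/

section Reflection

variable {n : ℕ} {e : EuclideanSpace ℝ (Fin n)} {s : ℝ}

/-- The reflection of the half space in the vertical hyperplane `⟪e, x⟫ = s`; it is the orthogonal
reflection when `e` is a unit vector. -/
def planeReflection (e : EuclideanSpace ℝ (Fin n)) (s : ℝ) (X : Point n) : Point n :=
  (X.1 - (2 * (inner ℝ e X.1 - s)) • e, X.2)

lemma planeReflection_mem_upperHalf {X : Point n} (hX : X ∈ upperHalf n) :
    planeReflection e s X ∈ upperHalf n := hX

lemma planeReflection_of_inner_eq {X : Point n} (hX : inner ℝ e X.1 = s) :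
    planeReflection e s X = X := by
  simp [planeReflection, hX]

lemma inner_planeReflection (he : ‖e‖ = 1) (s : ℝ) (X : Point n) :
    inner ℝ e (planeReflection e s X).1 = 2 * s - inner ℝ e X.1 := by
  simp only [planeReflection, inner_sub_right, inner_smul_right, real_inner_self_eq_norm_sq, he]
  ring

lemma le_inner_planeReflection (he : ‖e‖ = 1) {X : Point n} (hX : inner ℝ e X.1 ≤ s) :
    s ≤ inner ℝ e (planeReflection e s X).1 := by
  rw [inner_planeReflection he]
  linarith

lemma planeReflection_planeReflection (he : ‖e‖ = 1) (s : ℝ) (X : Point n) :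
    planeReflection e s (planeReflection e s X) = X := by
  ext1
  · rw [planeReflection, inner_planeReflection he]
    simp only [planeReflection]
    module
  · rfl

lemma norm_sub_planeReflection_sq (he : ‖e‖ = 1) (s : ℝ) (X Y : Point n) :
    ‖X.1 - (planeReflection e s Y).1‖ ^ 2 =
      ‖X.1 - Y.1‖ ^ 2 + 4 * (inner ℝ e X.1 - s) * (inner ℝ e Y.1 - s) := by
  have hsub : X.1 - (planeReflection e s Y).1 =
      (X.1 - Y.1) + (2 * (inner ℝ e Y.1 - s)) • e := by
    simp only [planeReflection]
    abel
  rw [hsub, norm_add_sq_real, inner_smul_right, norm_smul, mul_pow, he,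
    real_inner_comm e (X.1 - Y.1), inner_sub_right, Real.norm_eq_abs, sq_abs]
  ring

lemma hsDist_planeReflection (he : ‖e‖ = 1) (s : ℝ) (X Y : Point n) :
    hsDist (planeReflection e s X) (planeReflection e s Y) = hsDist X Y := by
  have hnorm : ‖(planeReflection e s X).1 - (planeReflection e s Y).1‖ ^ 2 = ‖X.1 - Y.1‖ ^ 2 := by
    rw [norm_sub_planeReflection_sq he, norm_sub_rev, norm_sub_planeReflection_sq he,
      norm_sub_rev, inner_planeReflection he]
    ring
  rw [hsDist, hnorm]
  rfl

lemma hsDist_le_hsDist_planeReflection (he : ‖e‖ = 1) {X Y : Point n} (hX : s ≤ inner ℝ e X.1)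
    (hY : s ≤ inner ℝ e Y.1) : hsDist X Y ≤ hsDist X (planeReflection e s Y) := by
  refine Real.sqrt_le_sqrt (add_le_add_left ?_ _)
  rw [norm_sub_planeReflection_sq he]
  nlinarith

lemma hsDist_lt_hsDist_planeReflection (he : ‖e‖ = 1) {X Y : Point n} (hX : s < inner ℝ e X.1)
    (hY : s < inner ℝ e Y.1) : hsDist X Y < hsDist X (planeReflection e s Y) := by
  refine Real.sqrt_lt_sqrt (by positivity) (add_lt_add_left ?_ _)
  rw [norm_sub_planeReflection_sq he]
  nlinarith

lemma weightedKernel_planeReflection (he : ‖e‖ = 1) (s α β lam : ℝ) (X Y : Point n) :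
    weightedKernel α β lam (planeReflection e s X) (planeReflection e s Y) =
      weightedKernel α β lam X Y := by
  rw [weightedKernel, hsDist_planeReflection he]
  rfl

lemma weightedKernel_planeReflection_le (he : ‖e‖ = 1) (α β : ℝ) {lam : ℝ} (hlam : 0 ≤ lam)
    {X Y : Point n} (hX : s ≤ inner ℝ e X.1) (hY : s ≤ inner ℝ e Y.1) :
    weightedKernel α β lam X (planeReflection e s Y) ≤ weightedKernel α β lam X Y := by
  refine mul_le_mul_right ?_ _
  rw [ENNReal.rpow_neg, ENNReal.rpow_neg, ENNReal.inv_le_inv]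
  gcongr
  exact hsDist_le_hsDist_planeReflection he hX hY

lemma weightedKernel_planeReflection_lt (he : ‖e‖ = 1) (α β : ℝ) {lam : ℝ} (hlam : 0 < lam)
    {X Y : Point n} (hXu : X ∈ upperHalf n) (hYu : Y ∈ upperHalf n) (hX : s < inner ℝ e X.1)
    (hY : s < inner ℝ e Y.1) :
    weightedKernel α β lam X (planeReflection e s Y) < weightedKernel α β lam X Y := by
  have ht : 0 < X.2 := hXu
  have hz : 0 < Y.2 := hYu
  have htα : ENNReal.ofReal (X.2 ^ (-α)) ≠ 0 := (ENNReal.ofReal_pos.2 (by positivity)).ne'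
  have hzβ : ENNReal.ofReal (Y.2 ^ (-β)) ≠ 0 := (ENNReal.ofReal_pos.2 (by positivity)).ne'
  have hdist := hsDist_lt_hsDist_planeReflection he hX hY
  refine ENNReal.mul_lt_mul_right (mul_ne_zero htα hzβ) (by finiteness) ?_
  rw [ENNReal.rpow_neg, ENNReal.rpow_neg, ENNReal.inv_lt_inv]
  exact ENNReal.rpow_lt_rpow
    ((ENNReal.ofReal_lt_ofReal_iff ((Real.sqrt_nonneg _).trans_lt hdist)).2 hdist) hlam

@[fun_prop]
lemma continuous_planeReflection : Continuous (planeReflection e s) := by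
  unfold planeReflection
  fun_prop

@[fun_prop]
lemma measurable_planeReflection : Measurable (planeReflection e s) :=
  continuous_planeReflection.measurable

lemma measurePreserving_planeReflection (he : ‖e‖ = 1) (s : ℝ) :
    MeasurePreserving (planeReflection e s) (halfVolume n) (halfVolume n) := by
  have hbase : (fun x : EuclideanSpace ℝ (Fin n) => x - (2 * (inner ℝ e x - s)) • e) =
      (fun x => x + (2 * s) • e) ∘ (Submodule.span ℝ {e})ᗮ.reflection := by
    funext x
    simp only [Function.comp_apply, Submodule.reflection_orthogonal_apply,
      Submodule.reflection_singleton_apply, he, map_one, one_pow, div_one]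
    module
  have hmp : MeasurePreserving (planeReflection e s) volume volume :=
    (hbase ▸ (measurePreserving_add_right volume ((2 * s) • e)).comp
      (Submodule.span ℝ {e})ᗮ.reflection.measurePreserving).prod (MeasurePreserving.id volume)
  exact hmp.restrict_preimage measurableSet_upperHalf

lemma ae_of_ae_le_inner (he : ‖e‖ = 1) {P : Point n → Prop}
    (hP : ∀ Y, P (planeReflection e s Y) → P Y)
    (h : ∀ᵐ Y ∂(halfVolume n), s ≤ inner ℝ e Y.1 → P Y) : ∀ᵐ Y ∂(halfVolume n), P Y := by
  filter_upwards [h, (measurePreserving_planeReflection he s).quasiMeasurePreserving.ae h]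
    with Y hY hρY
  rcases le_total s (inner ℝ e Y.1) with hs | hs
  · exact hY hs
  · exact hP Y (hρY (le_inner_planeReflection he hs))

lemma two_mul_lintegral_eq_add_planeReflection (he : ‖e‖ = 1) (s : ℝ) {f : Point n → ℝ≥0∞}
    (hf : Measurable f) :
    2 * ∫⁻ Y, f Y ∂(halfVolume n) = ∫⁻ Y, f Y + f (planeReflection e s Y) ∂(halfVolume n) := by
  rw [lintegral_add_left hf, (measurePreserving_planeReflection he s).lintegral_comp hf, two_mul]

lemma potential_comp_planeReflection (he : ‖e‖ = 1) (s α β lam : ℝ) {f : Point n → ℝ≥0∞}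
    (hf : Measurable f) (X : Point n) :
    potential α β lam (fun Y => f (planeReflection e s Y)) X =
      potential α β lam f (planeReflection e s X) := by
  unfold potential
  rw [← (measurePreserving_planeReflection he s).lintegral_comp
    (f := fun Y => f Y * weightedKernel α β lam (planeReflection e s X) Y) (by fun_prop)]
  simp only [weightedKernel_planeReflection he]

end Reflection

section Polarization

variable {n : ℕ} {e : EuclideanSpace ℝ (Fin n)} {s : ℝ}

lemma mul_add_mul_le_mul_add_mul_swap {a b k l : ℝ≥0∞} (hab : a ≤ b) (hlk : l ≤ k) :
    a * k + b * l ≤ b * k + a * l := by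
  obtain ⟨d, rfl⟩ := exists_add_of_le hlk
  calc a * (l + d) + b * l = a * l + b * l + a * d := by ring
    _ ≤ a * l + b * l + b * d := by gcongr
    _ = b * (l + d) + a * l := by ring

lemma eq_of_mul_add_mul_eq_swap {a b k l : ℝ≥0∞} (ha : a ≠ ⊤) (hb : b ≠ ⊤) (hk : k ≠ ⊤)
    (hlk : l < k) (h : a * k + b * l = b * k + a * l) : a = b := by
  lift a to NNReal using ha
  lift b to NNReal using hb
  lift k to NNReal using hk
  lift l to NNReal using ne_top_of_lt hlk
  norm_cast at *
  have hlk' : (0 : ℝ) < k - l := sub_pos.2 (by exact_mod_cast hlk)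
  have hreal : (a : ℝ) * k + b * l = b * k + a * l := by exact_mod_cast h
  exact NNReal.coe_injective (mul_right_cancel₀ hlk'.ne' (by linarith [hreal]))

/-- The potential increases under polarization: moving the larger of two mirror values of the
density to the side of `X` can only increase the potential at `X`. -/
lemma potential_le_of_polarization_le (he : ‖e‖ = 1) (α β : ℝ) {lam : ℝ} (hlam : 0 ≤ lam)
    {F G : Point n → ℝ≥0∞} (hF : Measurable F) (hG : Measurable G) {X : Point n}
    (hX : s ≤ inner ℝ e X.1)
    (h : ∀ᵐ Y ∂(halfVolume n), s ≤ inner ℝ e Y.1 →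
      max (F Y) (F (planeReflection e s Y)) ≤ G Y ∧
        min (F Y) (F (planeReflection e s Y)) ≤ G (planeReflection e s Y)) :
    potential α β lam F X ≤ potential α β lam G X := by
  rw [← ENNReal.mul_le_mul_iff_right (a := 2) (by norm_num) (by norm_num), potential, potential,
    two_mul_lintegral_eq_add_planeReflection he s (by fun_prop),
    two_mul_lintegral_eq_add_planeReflection he s (by fun_prop)]
  refine lintegral_mono_ae (ae_of_ae_le_inner he (s := s) (fun Y hY => ?_) ?_)
  · rw [planeReflection_planeReflection he] at hY
    rwa [add_comm, add_comm (G Y * _)]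
  filter_upwards [h] with Y hY hs
  obtain ⟨hmax, hmin⟩ := hY hs
  rcases le_total (F Y) (F (planeReflection e s Y)) with hle | hle
  · rw [max_eq_right hle] at hmax
    rw [min_eq_left hle] at hmin
    refine (mul_add_mul_le_mul_add_mul_swap hle
      (weightedKernel_planeReflection_le he α β hlam hX hs)).trans ?_
    gcongr
  · rw [max_eq_left hle] at hmax
    rw [min_eq_right hle] at hmin
    gcongr

/-- `f` does not exceed its reflection on the far side `s ≤ ⟪e, x⟫` of a hyperplane: the comparison
property propagated by the moving planes. -/
def ReflectionLE (e : EuclideanSpace ℝ (Fin n)) (s : ℝ) (f : Point n → ℝ≥0∞) : Prop :=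
  ∀ X ∈ upperHalf n, s ≤ inner ℝ e X.1 → f X ≤ f (planeReflection e s X)

/-- `f` is symmetric about the vertical hyperplane `⟪e, x⟫ = s`. -/
def IsPlaneSymmetric (e : EuclideanSpace ℝ (Fin n)) (s : ℝ) (f : Point n → ℝ≥0∞) : Prop :=
  ∀ X ∈ upperHalf n, f (planeReflection e s X) = f X

lemma potential_le_potential_planeReflection (he : ‖e‖ = 1) (α β : ℝ) {lam : ℝ} (hlam : 0 ≤ lam)
    {F : Point n → ℝ≥0∞} (hF : Measurable F)
    (h : ∀ᵐ Y ∂(halfVolume n), s ≤ inner ℝ e Y.1 → F Y ≤ F (planeReflection e s Y)) {X : Point n}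
    (hX : s ≤ inner ℝ e X.1) :
    potential α β lam F X ≤ potential α β lam F (planeReflection e s X) := by
  rw [← potential_comp_planeReflection he s α β lam hF]
  refine potential_le_of_polarization_le he α β hlam hF (by fun_prop) hX ?_
  filter_upwards [h] with Y hY hs
  rw [planeReflection_planeReflection he]
  exact ⟨max_le (hY hs) le_rfl, min_le_left _ _⟩

lemma ae_eq_planeReflection_of_potential_eq (he : ‖e‖ = 1) {α β lam : ℝ} (hlam : 0 < lam)
    {F : Point n → ℝ≥0∞} (hF : Measurable F) (hF_top : ∀ Y, F Y ≠ ⊤) (hFle : ReflectionLE e s F)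
    {X : Point n} (hXu : X ∈ upperHalf n) (hX : s < inner ℝ e X.1)
    (hX_top : potential α β lam F X ≠ ⊤)
    (hXeq : potential α β lam F X = potential α β lam F (planeReflection e s X)) :
    ∀ᵐ Y ∂(halfVolume n), F Y = F (planeReflection e s Y) := by
  set K := weightedKernel α β lam X
  set ρ := planeReflection e s
  have hint : 2 * potential α β lam F X = ∫⁻ Y, F Y * K Y + F (ρ Y) * K (ρ Y) ∂(halfVolume n) :=
    two_mul_lintegral_eq_add_planeReflection he s (by fun_prop)
  have hint' : 2 * potential α β lam F X = ∫⁻ Y, F (ρ Y) * K Y + F Y * K (ρ Y) ∂(halfVolume n) := by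
    rw [hXeq, ← potential_comp_planeReflection he s α β lam hF, potential,
      two_mul_lintegral_eq_add_planeReflection he s (by fun_prop)]
    simp only [planeReflection_planeReflection he, K, ρ]
  have hle : ∀ᵐ Y ∂(halfVolume n),
      F Y * K Y + F (ρ Y) * K (ρ Y) ≤ F (ρ Y) * K Y + F Y * K (ρ Y) := by
    refine ae_of_ae_le_inner he (s := s) (fun Y hY => ?_) ?_
    · simpa only [ρ, planeReflection_planeReflection he, add_comm] using hY
    · filter_upwards [ae_mem_upperHalf] with Y hYu hs
      exact mul_add_mul_le_mul_add_mul_swap (hFle Y hYu hs)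
        (weightedKernel_planeReflection_le he α β hlam.le hX.le hs)
  have heq := ae_eq_of_ae_le_of_lintegral_le hle (hint ▸ by finiteness) (by fun_prop)
    (hint' ▸ hint.le)
  refine ae_of_ae_le_inner he (s := s) (fun Y hY => ?_) ?_
  · simpa only [ρ, planeReflection_planeReflection he] using hY.symm
  filter_upwards [heq, ae_mem_upperHalf, ae_weightedKernel_ne_top α β lam hXu]
    with Y hYeq hYu hY_top hs
  rcases hs.eq_or_lt with hs | hs
  · rw [show ρ Y = Y from planeReflection_of_inner_eq hs.symm]
  · exact eq_of_mul_add_mul_eq_swap (hF_top _) (hF_top _) hY_top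
      (weightedKernel_planeReflection_lt he α β hlam hXu hYu hX hs) hYeq

namespace IsEulerLagrangePair

variable {lam κ θ α β : ℝ} {U V : Point n → ℝ≥0∞}

lemma reflectionLE_fst_of_ae_snd (h : IsEulerLagrangePair lam κ θ α β U V) (he : ‖e‖ = 1)
    (hV : ∀ᵐ Y ∂(halfVolume n), s ≤ inner ℝ e Y.1 → V Y ≤ V (planeReflection e s Y)) :
    ReflectionLE e s U := fun X hXu hX => by
  rw [h.fst_eq X hXu, h.fst_eq _ (planeReflection_mem_upperHalf hXu)]
  refine potential_le_potential_planeReflection he α β h.lam_pos.le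
    (h.measurable_snd.pow_const κ) ?_ hX
  filter_upwards [hV] with Y hY hs
  exact ENNReal.rpow_le_rpow (hY hs) h.κ_pos.le

lemma reflectionLE_fst (h : IsEulerLagrangePair lam κ θ α β U V) (he : ‖e‖ = 1)
    (hV : ReflectionLE e s V) : ReflectionLE e s U :=
  h.reflectionLE_fst_of_ae_snd he (ae_mem_upperHalf.mono hV)

lemma isPlaneSymmetric_fst_of_ae_snd (h : IsEulerLagrangePair lam κ θ α β U V) (he : ‖e‖ = 1)
    (hV : ∀ᵐ Y ∂(halfVolume n), V (planeReflection e s Y) = V Y) :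
    IsPlaneSymmetric e s U := fun X hX => by
  rw [h.fst_eq X hX, h.fst_eq _ (planeReflection_mem_upperHalf hX),
    ← potential_comp_planeReflection he s α β lam (h.measurable_snd.pow_const κ)]
  exact potential_congr_ae (hV.mono fun Y hY => by simp only [hY]) X

lemma fst_lt_planeReflection (h : IsEulerLagrangePair lam κ θ α β U V) (he : ‖e‖ = 1)
    (hle : ReflectionLE e s V) (hsymm : ¬ IsPlaneSymmetric e s U) {X : Point n}
    (hXu : X ∈ upperHalf n) (hX : s < inner ℝ e X.1) : U X < U (planeReflection e s X) := by
  refine (h.reflectionLE_fst he hle X hXu hX.le).lt_of_ne fun heq => hsymm ?_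
  rw [h.fst_eq X hXu, h.fst_eq _ (planeReflection_mem_upperHalf hXu)] at heq
  have hV := ae_eq_planeReflection_of_potential_eq he h.lam_pos (h.measurable_snd.pow_const κ)
    (fun Y => ENNReal.rpow_ne_top_of_nonneg h.κ_pos.le (h.snd_ne_top Y))
    (fun Y hYu hY => ENNReal.rpow_le_rpow (hle Y hYu hY) h.κ_pos.le) hXu hX
    (h.fst_eq X hXu ▸ h.fst_ne_top X) heq
  refine h.isPlaneSymmetric_fst_of_ae_snd he (hV.mono fun Y hY => ?_)
  exact ENNReal.rpow_left_injective h.κ_pos.ne' hY.symm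

end IsEulerLagrangePair

end Polarization

/-! ### The small excess principle -/

section BernoulliHolder

lemma rpow_sub_rpow_le_mul_sub {a b j : ℝ} (ha : 0 < a) (hb : 0 ≤ b) (hj : 1 ≤ j) :
    a ^ j - b ^ j ≤ j * a ^ (j - 1) * (a - b) := by
  have hbern : 1 + j * (b / a - 1) ≤ b ^ j / a ^ j := by
    have hba : 0 ≤ b / a := by positivity
    have h := one_add_mul_self_le_rpow_one_add (s := b / a - 1) (by linarith) hj
    rwa [add_sub_cancel, Real.div_rpow hb ha.le] at h
  rw [le_div_iff₀ (by positivity)] at hbern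
  have haj : a ^ (j - 1) = a ^ j / a := Real.rpow_sub_one ha.ne' j
  calc a ^ j - b ^ j ≤ a ^ j - (1 + j * (b / a - 1)) * a ^ j := by linarith
    _ = j * a ^ (j - 1) * (a - b) := by
      rw [haj]
      field_simp
      ring

lemma ennreal_rpow_sub_rpow_le_mul_sub {a b : ℝ≥0∞} {j : ℝ} (ha : a ≠ ⊤) (hj : 1 ≤ j) :
    a ^ j - b ^ j ≤ ENNReal.ofReal j * a ^ (j - 1) * (a - b) := by
  have hj0 : 0 ≤ j := by linarith
  rcases le_or_gt a b with hab | hab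
  · simp [tsub_eq_zero_of_le (ENNReal.rpow_le_rpow hab hj0)]
  lift a to NNReal using ha
  lift b to NNReal using ne_top_of_lt hab
  have ha0 : (0 : ℝ) < a := b.coe_nonneg.trans_lt (by exact_mod_cast hab)
  rw [← ENNReal.ofReal_coe_nnreal, ← ENNReal.ofReal_coe_nnreal, ENNReal.ofReal_rpow_of_pos ha0,
    ENNReal.ofReal_rpow_of_pos ha0, ENNReal.ofReal_rpow_of_nonneg b.coe_nonneg hj0,
    ← ENNReal.ofReal_sub _ b.coe_nonneg, ← ENNReal.ofReal_sub _ (by positivity),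
    ← ENNReal.ofReal_mul hj0, ← ENNReal.ofReal_mul (by positivity)]
  exact ENNReal.ofReal_le_ofReal (rpow_sub_rpow_le_mul_sub ha0 b.coe_nonneg hj)

lemma eLpNorm'_le_mul_rpow_mul {S : Type*} [MeasurableSpace S] {μ : Measure S}
    {d f g : S → ℝ≥0∞} {c : ℝ≥0∞} {j r : ℝ} (hj : 1 ≤ j) (hr : 0 < r) (hc : c ≠ ⊤)
    (hf : Measurable f) (hg : Measurable g) (h : ∀ᵐ x ∂μ, d x ≤ c * f x ^ (j - 1) * g x) :
    eLpNorm' d (r / j) μ ≤ c * eLpNorm' f r μ ^ (j - 1) * eLpNorm' g r μ := by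
  have hj0 : 0 < j := by linarith
  have hq : 0 ≤ 1 - 1 / j := by
    rw [sub_nonneg, div_le_one hj0]
    exact hj
  have hpow : ∀ x, (c * f x ^ (j - 1) * g x) ^ (r / j) =
      c ^ (r / j) * ((f x ^ r) ^ (1 - 1 / j) * (g x ^ r) ^ (1 / j)) := fun x => by
    rw [ENNReal.mul_rpow_of_nonneg _ _ (by positivity), ENNReal.mul_rpow_of_nonneg _ _
      (by positivity), ← ENNReal.rpow_mul, ← ENNReal.rpow_mul, ← ENNReal.rpow_mul, mul_assoc]
    congr 3 <;> field_simp
  have hint : ∫⁻ x, d x ^ (r / j) ∂μ ≤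
      c ^ (r / j) * ((∫⁻ x, f x ^ r ∂μ) ^ (1 - 1 / j) * (∫⁻ x, g x ^ r ∂μ) ^ (1 / j)) := by
    calc ∫⁻ x, d x ^ (r / j) ∂μ
        ≤ ∫⁻ x, c ^ (r / j) * ((f x ^ r) ^ (1 - 1 / j) * (g x ^ r) ^ (1 / j)) ∂μ :=
          lintegral_mono_ae (h.mono fun x hx => hpow x ▸ ENNReal.rpow_le_rpow hx (by positivity))
      _ = c ^ (r / j) * ∫⁻ x, (f x ^ r) ^ (1 - 1 / j) * (g x ^ r) ^ (1 / j) ∂μ :=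
          lintegral_const_mul' _ _ (ENNReal.rpow_ne_top_of_nonneg (by positivity) hc)
      _ ≤ _ := by
          gcongr
          exact ENNReal.lintegral_mul_norm_pow_le (hf.pow_const r).aemeasurable
            (hg.pow_const r).aemeasurable hq (by positivity) (by ring)
  rw [eLpNorm'_eq_lintegral_rpow, eLpNorm'_eq_lintegral_rpow, eLpNorm'_eq_lintegral_rpow]
  refine (ENNReal.rpow_le_rpow hint (by positivity)).trans_eq ?_
  rw [ENNReal.mul_rpow_of_nonneg _ _ (by positivity), ENNReal.mul_rpow_of_nonneg _ _
    (by positivity), ← ENNReal.rpow_mul, ← ENNReal.rpow_mul, ← ENNReal.rpow_mul,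
    ← ENNReal.rpow_mul, mul_assoc, mul_one_div_cancel (by positivity),
    ENNReal.rpow_one]
  congr 3 <;> field_simp

end BernoulliHolder

section Excess

variable {n : ℕ} {e : EuclideanSpace ℝ (Fin n)} {s : ℝ} {f : Point n → ℝ≥0∞}

/-- The amount by which `f` exceeds its reflection on the far side `s ≤ ⟪e, x⟫` of a hyperplane,
extended by zero. -/
def reflectionExcess (e : EuclideanSpace ℝ (Fin n)) (s : ℝ) (f : Point n → ℝ≥0∞) :
    Point n → ℝ≥0∞ :=
  {X | s ≤ inner ℝ e X.1}.indicator fun X => f X - f (planeReflection e s X)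

/-- The set on the far side of a hyperplane where `f` exceeds its reflection; the plane can be moved
on as long as this set carries little energy. -/
def excessSet (e : EuclideanSpace ℝ (Fin n)) (s : ℝ) (f : Point n → ℝ≥0∞) : Set (Point n) :=
  {X | s ≤ inner ℝ e X.1 ∧ f (planeReflection e s X) < f X}

lemma measurableSet_le_inner (e : EuclideanSpace ℝ (Fin n)) (s : ℝ) :
    MeasurableSet {X : Point n | s ≤ inner ℝ e X.1} :=
  (isClosed_le continuous_const (by fun_prop)).measurableSet

lemma measurable_reflectionExcess (hf : Measurable f) : Measurable (reflectionExcess e s f) :=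
  (hf.sub (by fun_prop)).indicator (measurableSet_le_inner e s)

lemma measurableSet_excessSet (hf : Measurable f) : MeasurableSet (excessSet e s f) :=
  (measurableSet_le_inner e s).inter (measurableSet_lt (by fun_prop) hf)

lemma reflectionExcess_le (X : Point n) : reflectionExcess e s f X ≤ f X :=
  Set.indicator_apply_le' (fun _ => tsub_le_self) (fun _ => zero_le)

lemma reflectionExcess_of_le_inner {X : Point n} (hX : s ≤ inner ℝ e X.1) :
    reflectionExcess e s f X = f X - f (planeReflection e s X) :=
  Set.indicator_of_mem (s := {X : Point n | s ≤ inner ℝ e X.1}) hX _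

lemma reflectionExcess_of_not_le_inner {X : Point n} (hX : ¬ s ≤ inner ℝ e X.1) :
    reflectionExcess e s f X = 0 :=
  Set.indicator_of_notMem (s := {X : Point n | s ≤ inner ℝ e X.1}) hX _

lemma reflectionExcess_rpow_le {j : ℝ} (hj : 1 ≤ j) (hf : ∀ X, f X ≠ ⊤) (X : Point n) :
    reflectionExcess e s (fun X => f X ^ j) X ≤
      ENNReal.ofReal j * (excessSet e s f).indicator f X ^ (j - 1) * reflectionExcess e s f X := by
  by_cases hX : s ≤ inner ℝ e X.1
  · rw [reflectionExcess_of_le_inner hX, reflectionExcess_of_le_inner hX]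
    by_cases hlt : f (planeReflection e s X) < f X
    · rw [Set.indicator_of_mem (show X ∈ excessSet e s f from ⟨hX, hlt⟩)]
      exact ennreal_rpow_sub_rpow_le_mul_sub (hf X) hj
    · simp [tsub_eq_zero_of_le (ENNReal.rpow_le_rpow (not_lt.1 hlt) (by linarith : 0 ≤ j))]
  · simp [reflectionExcess_of_not_le_inner hX]

lemma eLpNorm'_reflectionExcess_rpow_le {μ : Measure (Point n)} {j r : ℝ} (hj : 1 ≤ j) (hr : 0 < r)
    (hf : Measurable f) (hf_top : ∀ X, f X ≠ ⊤) :
    eLpNorm' (reflectionExcess e s fun X => f X ^ j) (r / j) μ ≤ ENNReal.ofReal j *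
      eLpNorm' f r (μ.restrict (excessSet e s f)) ^ (j - 1) *
        eLpNorm' (reflectionExcess e s f) r μ := by
  have hset := measurableSet_excessSet (e := e) (s := s) hf
  have hrestrict : eLpNorm' ((excessSet e s f).indicator f) r μ =
      eLpNorm' f r (μ.restrict (excessSet e s f)) := by
    rw [eLpNorm'_eq_lintegral_rpow, eLpNorm'_eq_lintegral_rpow, ← lintegral_indicator hset]
    congr 2 with X
    by_cases hX : X ∈ excessSet e s f <;> simp [hX, hr]
  rw [← hrestrict]
  exact eLpNorm'_le_mul_rpow_mul hj hr ENNReal.ofReal_ne_top (hf.indicator hset)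
    (measurable_reflectionExcess hf) (.of_forall (reflectionExcess_rpow_le hj hf_top))

lemma eLpNorm'_reflectionExcess_rpow_ne_top {μ : Measure (Point n)} {a r : ℝ} (ha : 0 < a)
    (hr : 0 < r) (hf : eLpNorm' f r μ ≠ ⊤) :
    eLpNorm' (reflectionExcess e s fun X => f X ^ a) (r / a) μ ≠ ⊤ := by
  refine ne_top_of_le_ne_top ?_ (eLpNorm'_mono_enorm_ae (g := fun X => f X ^ a) (by positivity)
    (.of_forall fun X => reflectionExcess_le X))
  rw [eLpNorm'_rpow f _ ha, div_mul_cancel₀ _ ha.ne']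
  exact ENNReal.rpow_ne_top_of_nonneg ha.le hf

/-- Polarization bounds `potential f` by the potential of `(f ∘ ρ) ^ a + (f ^ a - (f ∘ ρ) ^ a)₊`
raised to the power `1 / a`; Minkowski's inequality in `L^{1/a}` then splits off the reflected
potential. -/
lemma reflectionExcess_potential_rpow_le (he : ‖e‖ = 1) {α β lam : ℝ} (hlam : 0 ≤ lam)
    (hf : Measurable f) {a : ℝ} (ha : 0 < a) (ha1 : a ≤ 1) (X : Point n) :
    reflectionExcess e s (fun Z => potential α β lam f Z ^ a) X ≤
      potential α β lam (fun Y => reflectionExcess e s (fun Z => f Z ^ a) Y ^ a⁻¹) X ^ a := by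
  by_cases hX : s ≤ inner ℝ e X.1
  swap
  · simp [reflectionExcess_of_not_le_inner hX]
  set D := reflectionExcess e s fun Z => f Z ^ a with hD
  set K := weightedKernel α β lam X
  have hD_meas : Measurable D := measurable_reflectionExcess (hf.pow_const a)
  have hcancel : ∀ c : ℝ≥0∞, (c ^ a) ^ a⁻¹ = c := ENNReal.rpow_rpow_inv ha.ne'
  have hpolar : potential α β lam f X ≤
      potential α β lam (fun Y => (f (planeReflection e s Y) ^ a + D Y) ^ a⁻¹) X := by
    refine potential_le_of_polarization_le he α β hlam hf (by fun_prop) hX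
      (.of_forall fun Y hY => ⟨max_le ?_ ?_, (min_le_left _ _).trans ?_⟩)
    · rw [hD, reflectionExcess_of_le_inner hY, ← ENNReal.rpow_inv_le_iff (inv_pos.2 ha), inv_inv]
      exact le_add_tsub
    · rw [← ENNReal.rpow_inv_le_iff (inv_pos.2 ha), inv_inv]
      exact le_self_add
    · rw [← ENNReal.rpow_inv_le_iff (inv_pos.2 ha), inv_inv, planeReflection_planeReflection he]
      exact le_self_add
  have hMinkowski := ENNReal.lintegral_Lp_add_le (μ := halfVolume n) (p := a⁻¹)
    (f := fun Y => f (planeReflection e s Y) ^ a * K Y ^ a) (g := fun Y => D Y * K Y ^ a)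
    (by fun_prop) (by fun_prop) ((one_le_inv₀ ha).2 ha1)
  simp only [Pi.add_apply, ← add_mul, ENNReal.mul_rpow_of_nonneg _ _ (inv_nonneg.2 ha.le), hcancel,
    one_div, inv_inv] at hMinkowski
  rw [reflectionExcess_of_le_inner hX, tsub_le_iff_left,
    ← potential_comp_planeReflection he s α β lam hf]
  exact (ENNReal.rpow_le_rpow hpolar ha.le).trans hMinkowski

end Excess

/-- If `U` carries little energy where it exceeds its reflection, then it does not exceed its
reflection at all. This is what allows a plane to start at infinity and to be moved further. -/
def SmallExcessPrinciple {n : ℕ} (θ : ℝ) (U : Point n → ℝ≥0∞) : Prop :=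
  ∃ ε > 0, ∀ ⦃e : EuclideanSpace ℝ (Fin n)⦄ ⦃s : ℝ⦄, ‖e‖ = 1 →
    ∫⁻ X in excessSet e s U, U X ^ (θ + 1) ∂(halfVolume n) < ε → ReflectionLE e s U

lemma exists_pos_forall_lt_mul_rpow_lt_one {M : ℝ≥0∞} (hM : M ≠ ⊤) {r : ℝ} (hr : 0 < r) :
    ∃ ε > 0, ∀ x < ε, M * x ^ r < 1 := by
  have hlim : Tendsto (fun x : ℝ≥0∞ => M * x ^ r) (𝓝 0) (𝓝 (M * 0 ^ r)) :=
    ENNReal.Tendsto.const_mul (ENNReal.continuous_rpow_const.tendsto _) (Or.inr hM)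
  rw [ENNReal.zero_rpow_of_pos hr, mul_zero] at hlim
  exact (ENNReal.nhds_zero_basis.eventually_iff).1 (hlim.eventually_lt_const one_pos)

lemma IsBilinearBound.weightedKernel_swap {n : ℕ} {α β lam a b : ℝ} {C : ℝ≥0∞}
    (hC : IsBilinearBound (halfVolume n) (halfVolume n) (weightedKernel α β lam) a b C) :
    IsBilinearBound (halfVolume n) (halfVolume n) (weightedKernel β α lam) b a C := by
  convert hC.flip (by fun_prop) using 3
  exact weightedKernel_comm ..

namespace IsEulerLagrangePair

variable {n : ℕ} {lam κ θ α β : ℝ} {U V : Point n → ℝ≥0∞} {C : ℝ≥0∞}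
  {e : EuclideanSpace ℝ (Fin n)} {s a : ℝ}

lemma eLpNorm'_fst_ne_top (h : IsEulerLagrangePair lam κ θ α β U V) :
    eLpNorm' U (θ + 1) (halfVolume n) ≠ ⊤ :=
  (eLpNorm'_ne_top_iff (by linarith [h.θ_pos])).2 h.energy_ne_top

lemma reflectionExcess_fst_rpow_inv_le (h : IsEulerLagrangePair lam κ θ α β U V) (he : ‖e‖ = 1)
    (ha : 0 < a) (ha1 : a ≤ 1) {X : Point n} (hX : X ∈ upperHalf n) :
    reflectionExcess e s (fun Z => U Z ^ a) X ^ a⁻¹ ≤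
      potential α β lam (fun Y => reflectionExcess e s (fun Z => V Z ^ (κ * a)) Y ^ a⁻¹) X := by
  have hU : reflectionExcess e s (fun Z => U Z ^ a) X =
      reflectionExcess e s (fun Z => potential α β lam (fun Y => V Y ^ κ) Z ^ a) X := by
    simp only [reflectionExcess, Set.indicator, h.fst_eq X hX,
      h.fst_eq _ (planeReflection_mem_upperHalf hX)]
  rw [hU, ENNReal.rpow_inv_le_iff ha]
  simpa only [← ENNReal.rpow_mul] using reflectionExcess_potential_rpow_le he h.lam_pos.le
    (h.measurable_snd.pow_const κ) ha ha1 X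

lemma eLpNorm'_reflectionExcess_le (h : IsEulerLagrangePair lam κ θ α β U V)
    (hC : IsBilinearBound (halfVolume n) (halfVolume n) (weightedKernel α β lam)
      (1 - (θ + 1)⁻¹) (1 - (κ + 1)⁻¹) C) (he : ‖e‖ = 1) (ha : 0 < a) (ha1 : a ≤ 1) :
    eLpNorm' (reflectionExcess e s fun Z => U Z ^ a) ((θ + 1) / a) (halfVolume n) ≤
      C ^ a * eLpNorm' (reflectionExcess e s fun Z => V Z ^ (κ * a)) ((κ + 1) / (κ * a))
        (halfVolume n) := by
  have hκ := h.κ_pos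
  have hθ := h.θ_pos
  have ha' : 0 < a⁻¹ := inv_pos.2 ha
  have hU_top : ∀ X, reflectionExcess e s (fun Z => U Z ^ a) X ≠ ⊤ := fun X =>
    ne_top_of_le_ne_top (ENNReal.rpow_ne_top_of_nonneg ha.le (h.fst_ne_top X))
      (reflectionExcess_le X)
  have hV_top : ∀ X, reflectionExcess e s (fun Z => V Z ^ (κ * a)) X ≠ ⊤ := fun X =>
    ne_top_of_le_ne_top (ENNReal.rpow_ne_top_of_nonneg (by positivity) (h.snd_ne_top X))
      (reflectionExcess_le X)
  have hU_int := eLpNorm'_reflectionExcess_rpow_ne_top (e := e) (s := s) ha (by linarith)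
    h.eLpNorm'_fst_ne_top
  have hV_int := eLpNorm'_reflectionExcess_rpow_ne_top (e := e) (s := s) (mul_pos hκ ha)
    (by linarith) h.swap.eLpNorm'_fst_ne_top
  have hp : (θ + 1)⁻¹⁻¹ * a⁻¹ = (θ + 1) / a := by rw [inv_inv, div_eq_mul_inv]
  have hq : (1 - (κ + 1)⁻¹)⁻¹ * a⁻¹ = (κ + 1) / (κ * a) := by
    rw [← mul_inv, inv_eq_iff_eq_inv, inv_div]
    field_simp
    ring
  have hbound := hC.eLpNorm'_le (by positivity) (inv_lt_one_of_one_lt₀ (by linarith))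
    (inv_lt_one_of_one_lt₀ (by linarith))
    ((measurable_reflectionExcess (h.measurable_fst.pow_const a)).pow_const a⁻¹)
    ((measurable_reflectionExcess (h.measurable_snd.pow_const (κ * a))).pow_const a⁻¹)
    (fun X => ENNReal.rpow_ne_top_of_nonneg ha'.le (hU_top X))
    (fun X => ENNReal.rpow_ne_top_of_nonneg ha'.le (hV_top X))
    (ae_mem_upperHalf.mono fun X hX => h.reflectionExcess_fst_rpow_inv_le he ha ha1 hX)
  rw [eLpNorm'_rpow _ _ ha', eLpNorm'_rpow _ _ ha', hp, hq] at hbound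
  have hpow := hbound (ENNReal.rpow_ne_top_of_nonneg ha'.le hU_int)
    (ENNReal.rpow_ne_top_of_nonneg ha'.le hV_int)
  rwa [ENNReal.rpow_inv_le_iff ha, ENNReal.mul_rpow_of_nonneg _ _ ha.le,
    ENNReal.rpow_inv_rpow ha.ne'] at hpow

/-- One pass around the system. The exponent `a = min 1 κ` makes both Bernoulli steps, `V ^ a` to
`V ^ κ` and `U` to `U ^ (θ * a)`, raise to a power at least one. -/
lemma exists_eLpNorm'_reflectionExcess_le_mul_self (h : IsEulerLagrangePair lam κ θ α β U V)
    (hC : IsBilinearBound (halfVolume n) (halfVolume n) (weightedKernel α β lam)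
      (1 - (θ + 1)⁻¹) (1 - (κ + 1)⁻¹) C) (hC_top : C ≠ ⊤) (hθ : 1 < θ) (hκθ : 1 < κ * θ) :
    ∃ M ≠ ⊤, ∃ η : ℝ, 0 < η ∧ ∀ ⦃e : EuclideanSpace ℝ (Fin n)⦄ ⦃s : ℝ⦄, ‖e‖ = 1 →
      eLpNorm' (reflectionExcess e s U) (θ + 1) (halfVolume n) ≤
        M * eLpNorm' U (θ + 1) ((halfVolume n).restrict (excessSet e s U)) ^ η *
          eLpNorm' (reflectionExcess e s U) (θ + 1) (halfVolume n) := by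
  have hκ := h.κ_pos
  have hκ1 : 0 < κ + 1 := by linarith
  obtain ⟨a, ha, ha1, haκ, haθ⟩ : ∃ a, 0 < a ∧ a ≤ 1 ∧ a ≤ κ ∧ 1 < θ * a := by
    refine ⟨min 1 κ, lt_min one_pos hκ, min_le_left _ _, min_le_right _ _, ?_⟩
    rcases min_choice 1 κ with hmin | hmin <;> rw [hmin] <;> linarith
  have hj : 1 ≤ κ / a := (one_le_div ha).2 haκ
  have hVa_top : eLpNorm' (fun X => V X ^ a) ((κ + 1) / a) (halfVolume n) ≠ ⊤ := by
    rw [eLpNorm'_rpow V _ ha, div_mul_cancel₀ _ ha.ne']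
    exact ENNReal.rpow_ne_top_of_nonneg ha.le h.swap.eLpNorm'_fst_ne_top
  set j := κ / a
  refine ⟨C * (ENNReal.ofReal j * eLpNorm' (fun X => V X ^ a) ((κ + 1) / a) (halfVolume n) ^ (j - 1)
    * (C ^ a * ENNReal.ofReal (θ * a))), ?_, θ * a - 1, by linarith, fun e s he => ?_⟩
  · have := ENNReal.rpow_ne_top_of_nonneg (sub_nonneg.2 hj) hVa_top
    have := ENNReal.rpow_ne_top_of_nonneg ha.le hC_top
    finiteness
  have hUV := h.eLpNorm'_reflectionExcess_le (s := s) hC he one_pos le_rfl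
  have hV := eLpNorm'_reflectionExcess_rpow_le (e := e) (s := s) (μ := halfVolume n) hj
    (div_pos hκ1 ha) (h.measurable_snd.pow_const a)
    (fun X => ENNReal.rpow_ne_top_of_nonneg ha.le (h.snd_ne_top X))
  have hVU := h.swap.eLpNorm'_reflectionExcess_le (s := s) hC.weightedKernel_swap he ha ha1
  have hU := eLpNorm'_reflectionExcess_rpow_le (e := e) (s := s) (μ := halfVolume n)
    (r := θ + 1) haθ.le (by linarith) h.measurable_fst h.fst_ne_top
  have hja : a * j = κ := mul_div_cancel₀ _ ha.ne'
  simp only [ENNReal.rpow_one, div_one, mul_one] at hUV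
  simp only [← ENNReal.rpow_mul, hja, div_div] at hV
  calc eLpNorm' (reflectionExcess e s U) (θ + 1) (halfVolume n)
      ≤ C * (ENNReal.ofReal j * eLpNorm' (fun X => V X ^ a) ((κ + 1) / a) (halfVolume n) ^ (j - 1)
        * (C ^ a * (ENNReal.ofReal (θ * a) *
          eLpNorm' U (θ + 1) ((halfVolume n).restrict (excessSet e s U)) ^ (θ * a - 1) *
            eLpNorm' (reflectionExcess e s U) (θ + 1) (halfVolume n)))) := by
        refine hUV.trans ?_
        gcongr
        refine hV.trans ?_
        gcongr
        · exact Measure.restrict_le_self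
        · exact hVU.trans (by gcongr)
    _ = _ := by ring

theorem smallExcessPrinciple (h : IsEulerLagrangePair lam κ θ α β U V)
    (hC : IsBilinearBound (halfVolume n) (halfVolume n) (weightedKernel α β lam)
      (1 - (θ + 1)⁻¹) (1 - (κ + 1)⁻¹) C) (hC_top : C ≠ ⊤) (hθ : 1 < θ) (hκθ : 1 < κ * θ) :
    SmallExcessPrinciple θ U := by
  have hθ1 : 0 < θ + 1 := by linarith
  obtain ⟨M, hM, η, hη, hself⟩ := h.exists_eLpNorm'_reflectionExcess_le_mul_self hC hC_top hθ hκθ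
  obtain ⟨ε, hε, hsmall⟩ := exists_pos_forall_lt_mul_rpow_lt_one hM
    (mul_pos (one_div_pos.2 hθ1) hη)
  refine ⟨ε, hε, fun e s he henergy => ?_⟩
  set N := eLpNorm' (reflectionExcess e s U) (θ + 1) (halfVolume n)
  have hN_top : N ≠ ⊤ := by
    simpa using eLpNorm'_reflectionExcess_rpow_ne_top (e := e) (s := s) one_pos hθ1
      h.eLpNorm'_fst_ne_top
  have hlt := hsmall _ henergy
  rw [ENNReal.rpow_mul, ← eLpNorm'_eq_lintegral_rpow] at hlt
  have hN0 : N = 0 := by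
    by_contra hN0
    refine (hself (s := s) he).not_gt ?_
    simpa only [one_mul] using ENNReal.mul_lt_mul_left hN0 hN_top hlt
  have hzero := (eLpNorm'_eq_zero_iff hθ1
    (measurable_reflectionExcess h.measurable_fst).aestronglyMeasurable).1 hN0
  have hU : ∀ᵐ X ∂(halfVolume n), s ≤ inner ℝ e X.1 → U X ≤ U (planeReflection e s X) := by
    filter_upwards [hzero] with X hX hs
    rwa [reflectionExcess_of_le_inner hs, Pi.zero_apply, tsub_eq_zero_iff_le] at hX
  exact h.reflectionLE_fst he (h.swap.reflectionLE_fst_of_ae_snd he hU)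

end IsEulerLagrangePair

/-! ### Moving planes -/

section FiniteIntegral

lemma tendsto_setLIntegral_zero_of_ae_eventually_notMem {S ι : Type*} [MeasurableSpace S]
    {μ : Measure S} {l : Filter ι} [l.IsCountablyGenerated] {f : S → ℝ≥0∞} (hf : Measurable f)
    (hf_int : ∫⁻ x, f x ∂μ ≠ ⊤) {B : ι → Set S} (hB_meas : ∀ i, MeasurableSet (B i))
    (hB : ∀ᵐ x ∂μ, ∀ᶠ i in l, x ∉ B i) :
    Tendsto (fun i => ∫⁻ x in B i, f x ∂μ) l (𝓝 0) := by
  have hlim : Tendsto (fun i => ∫⁻ x, (B i).indicator f x ∂μ) l (𝓝 (∫⁻ _, 0 ∂μ)) := by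
    refine tendsto_lintegral_filter_of_dominated_convergence f
      (.of_forall fun i => hf.indicator (hB_meas i))
      (.of_forall fun i => .of_forall fun x => Set.indicator_le_self _ _ x) hf_int ?_
    filter_upwards [hB] with x hx
    exact tendsto_const_nhds.congr' (hx.mono fun i hi => (Set.indicator_of_notMem hi f).symm)
  simpa only [lintegral_indicator (hB_meas _), lintegral_zero] using hlim

variable {E : Type*} [NormedAddCommGroup E] [NormedSpace ℝ E] [MeasurableSpace E] [BorelSpace E]

/-- The translation preserves the finite measure with density `f`, hence by Poincaré recurrence
almost every point of a ball returns to it infinitely often, but translates leave every ball. -/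
lemma ae_eq_zero_of_translation_invariant {μ : Measure E} {f : E → ℝ≥0∞} (hf : Measurable f)
    (hf_int : ∫⁻ x, f x ∂μ ≠ ⊤) {c : E} (hc : c ≠ 0) (hμ : MeasurePreserving (· + c) μ μ)
    (hinv : ∀ᵐ x ∂μ, f (x + c) = f x) : f =ᵐ[μ] 0 := by
  set ν := μ.withDensity f
  have : IsFiniteMeasure ν := isFiniteMeasure_withDensity hf_int
  have hν : MeasurePreserving (· + c) ν ν := by
    refine ⟨hμ.measurable, Measure.ext fun A hA => ?_⟩
    rw [Measure.map_apply hμ.measurable hA, withDensity_apply _ hA,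
      withDensity_apply _ (hμ.measurable hA), ← hμ.setLIntegral_comp_preimage hA hf]
    exact lintegral_congr_ae ((ae_restrict_of_ae hinv).mono fun x hx => hx.symm)
  have hrec : ∀ᵐ x ∂ν, ∀ R : ℕ, x ∈ Metric.ball 0 (R : ℝ) →
      ∃ᶠ m in atTop, (· + c)^[m] x ∈ Metric.ball 0 (R : ℝ) :=
    ae_all_iff.2 fun R => hν.conservative.ae_mem_imp_frequently_image_mem
      Metric.isOpen_ball.measurableSet.nullMeasurableSet
  have hfalse : ∀ᵐ _ ∂ν, False := by
    filter_upwards [hrec] with x hx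
    obtain ⟨R, hR⟩ := exists_nat_gt ‖x‖
    obtain ⟨k, hk⟩ := exists_nat_gt ((R + ‖x‖) / ‖c‖)
    obtain ⟨m, hkm, hm⟩ := (hx R (mem_ball_zero_iff.2 hR)).forall_exists_of_atTop k
    rw [div_lt_iff₀ (norm_pos_iff.2 hc)] at hk
    rw [add_right_iterate, mem_ball_zero_iff] at hm
    have hmc : ‖m • c‖ ≤ ‖x + m • c‖ + ‖x‖ := by simpa using norm_sub_le (x + m • c) x
    rw [← Nat.cast_smul_eq_nsmul ℝ, norm_smul, Real.norm_natCast, Nat.cast_smul_eq_nsmul] at hmc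
    have : (k : ℝ) * ‖c‖ ≤ m * ‖c‖ := by gcongr
    linarith
  exact (withDensity_eq_zero_iff hf.aemeasurable).1
    (ae_eq_bot.1 (eventually_false_iff_eq_bot.1 hfalse))

end FiniteIntegral

section MovingPlanes

variable {n : ℕ} {e : EuclideanSpace ℝ (Fin n)} {s s' : ℝ} {f : Point n → ℝ≥0∞}

lemma ae_inner_ne (he : e ≠ 0) (s : ℝ) : ∀ᵐ X ∂(halfVolume n), inner ℝ e X.1 ≠ s := by
  let φ : Point n →ₗ[ℝ] ℝ := (innerₛₗ ℝ e).comp (LinearMap.fst ℝ _ _)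
  let H : AffineSubspace ℝ (Point n) := (affineSpan ℝ {s}).comap φ.toAffineMap
  have hmem : ∀ X : Point n, X ∈ H ↔ inner ℝ e X.1 = s := fun X => by
    simp [H, φ, AffineSubspace.mem_comap]
  have hH : H ≠ ⊤ := fun htop => by
    have hX := fun X => (hmem X).1 (htop ▸ AffineSubspace.mem_top ℝ _ X)
    have h0 := hX 0
    have he' := hX (e, 0)
    rw [Prod.fst_zero, inner_zero_right] at h0
    rw [← h0, inner_self_eq_zero] at he'
    exact he he'
  refine ae_restrict_of_ae (measure_mono_null (fun X hX => ?_)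
    (Measure.addHaar_affineSubspace volume H hH))
  exact (hmem X).2 (not_not.1 hX)

lemma planeReflection_neg (e : EuclideanSpace ℝ (Fin n)) (s : ℝ) (X : Point n) :
    planeReflection (-e) (-s) X = planeReflection e s X := by
  refine Prod.ext ?_ rfl
  simp only [planeReflection, inner_neg_left]
  module

lemma planeReflection_planeReflection_eq_add (he : ‖e‖ = 1) (s s' : ℝ) (X : Point n) :
    planeReflection e s' (planeReflection e s X) = X + ((2 * (s' - s)) • e, 0) := by
  refine Prod.ext ?_ (by simp [planeReflection])
  rw [planeReflection, inner_planeReflection he]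
  simp only [planeReflection, Prod.fst_add]
  module

lemma measurePreserving_add_halfVolume (c : EuclideanSpace ℝ (Fin n)) :
    MeasurePreserving (fun X : Point n => X + (c, 0)) (halfVolume n) (halfVolume n) := by
  have hpre : (fun X : Point n => X + (c, 0)) ⁻¹' upperHalf n = upperHalf n := by
    ext X
    simp [upperHalf]
  have h := (measurePreserving_add_right (volume : Measure (Point n)) (c, 0)).restrict_preimage
    (measurableSet_upperHalf (n := n))
  rwa [hpre] at h

lemma reflectionLE_of_forall_gt (he : ‖e‖ = 1)
    (hf : ∀ X ∈ upperHalf n, LowerSemicontinuousAt f X) (h : ∀ s' > s, ReflectionLE e s' f) :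
    ReflectionLE e s f := by
  intro X hXu hX
  have hlim : Tendsto (fun s' => planeReflection e s' (planeReflection e s X)) (𝓝[>] s) (𝓝 X) := by
    have hcont : Continuous fun s' => planeReflection e s' (planeReflection e s X) := by
      unfold planeReflection
      fun_prop
    have := hcont.tendsto s
    rw [planeReflection_planeReflection he] at this
    exact this.mono_left nhdsWithin_le_nhds
  by_contra! hlt
  obtain ⟨s', hs'lt, hs'⟩ := ((hlim.eventually (hf X hXu _ hlt)).and self_mem_nhdsWithin).exists
  have hle := h s' hs' _
    (planeReflection_mem_upperHalf (e := e) (s := s')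
      (planeReflection_mem_upperHalf (e := e) (s := s) hXu))
    (by rw [inner_planeReflection he, inner_planeReflection he]; linarith [show s < s' from hs'])
  rw [planeReflection_planeReflection he] at hle
  exact hle.not_gt hs'lt

lemma isPlaneSymmetric_of_reflectionLE_neg (he : ‖e‖ = 1) (h : ReflectionLE e s f)
    (hneg : ReflectionLE (-e) (-s) f) : IsPlaneSymmetric e s f := by
  have hfar : ∀ X ∈ upperHalf n, s ≤ inner ℝ e X.1 → f (planeReflection e s X) = f X := by
    intro X hXu hX
    refine le_antisymm ?_ (h X hXu hX)
    have hle := hneg _ (planeReflection_mem_upperHalf (e := e) (s := s) hXu)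
      (by rw [inner_neg_left, inner_planeReflection he]; linarith)
    rwa [planeReflection_neg, planeReflection_planeReflection he] at hle
  intro X hXu
  rcases le_total s (inner ℝ e X.1) with hX | hX
  · exact hfar X hXu hX
  · have heq := hfar _ (planeReflection_mem_upperHalf hXu)
      (by rw [inner_planeReflection he]; linarith)
    rw [planeReflection_planeReflection he] at heq
    exact heq.symm

namespace IsEulerLagrangePair

variable {lam κ θ α β : ℝ} {U V : Point n → ℝ≥0∞}

lemma energy_ne_zero (h : IsEulerLagrangePair lam κ θ α β U V) :
    ∫⁻ X, U X ^ (θ + 1) ∂(halfVolume n) ≠ 0 := by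
  intro h0
  have hθ : 0 < θ + 1 := by linarith [h.θ_pos]
  have hfalse : ∀ᵐ _ ∂(halfVolume n), False := by
    filter_upwards [(lintegral_eq_zero_iff (h.measurable_fst.pow_const _)).1 h0, ae_mem_upperHalf]
      with X hX hXu using h.fst_ne_zero X hXu ((ENNReal.rpow_eq_zero_iff_of_pos hθ).1 hX)
  have hpos : 0 < volume (upperHalf n) :=
    (isOpen_lt continuous_const continuous_snd).measure_pos volume ⟨(0, 1), zero_lt_one' ℝ⟩
  have hnull := ae_eq_bot.1 (eventually_false_iff_eq_bot.1 hfalse)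
  rw [halfVolume, Measure.restrict_eq_zero] at hnull
  exact hpos.ne' hnull

/-- Reflecting in two distinct parallel planes is a translation, which finite energy forbids. -/
lemma eq_of_isPlaneSymmetric (h : IsEulerLagrangePair lam κ θ α β U V) (he : ‖e‖ = 1)
    (hs : IsPlaneSymmetric e s U) (hs' : IsPlaneSymmetric e s' U) : s = s' := by
  by_contra hne
  have he0 : e ≠ 0 := fun h0 => by simp [h0] at he
  set c : Point n := ((2 * (s' - s)) • e, 0)
  have hc : c ≠ 0 := fun h0 => by
    have hsmul : (2 * (s' - s)) • e = 0 := congrArg Prod.fst h0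
    simp [sub_eq_zero, he0, Ne.symm hne] at hsmul
  have hinv : ∀ᵐ X ∂(halfVolume n), U (X + c) ^ (θ + 1) = U X ^ (θ + 1) := by
    filter_upwards [ae_mem_upperHalf] with X hX
    rw [← planeReflection_planeReflection_eq_add he,
      hs' _ (planeReflection_mem_upperHalf hX), hs X hX]
  have hzero := ae_eq_zero_of_translation_invariant (h.measurable_fst.pow_const (θ + 1))
    h.energy_ne_top hc (measurePreserving_add_halfVolume _) hinv
  exact h.energy_ne_zero ((lintegral_congr_ae hzero).trans lintegral_zero)

lemma exists_forall_ge_reflectionLE (h : IsEulerLagrangePair lam κ θ α β U V)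
    (hsmall : SmallExcessPrinciple θ U) (he : ‖e‖ = 1) :
    ∃ S, ∀ s ≥ S, ReflectionLE e s U := by
  obtain ⟨ε, hε, hsmall⟩ := hsmall
  have htail : Tendsto (fun s => ∫⁻ X in {X : Point n | s ≤ inner ℝ e X.1}, U X ^ (θ + 1)
      ∂(halfVolume n)) atTop (𝓝 0) := by
    refine tendsto_setLIntegral_zero_of_ae_eventually_notMem (h.measurable_fst.pow_const _)
      h.energy_ne_top (measurableSet_le_inner e) (.of_forall fun X => ?_)
    filter_upwards [eventually_gt_atTop (inner ℝ e X.1)] with s hs using not_le.2 hs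
  obtain ⟨S, hS⟩ := eventually_atTop.1 (htail.eventually_lt_const hε)
  exact ⟨S, fun s hs => hsmall he
    ((lintegral_mono_set fun X hX => hX.1).trans_lt (hS s hs))⟩

lemma eventually_reflectionLE (h : IsEulerLagrangePair lam κ θ α β U V)
    (hsmall : SmallExcessPrinciple θ U) (he : ‖e‖ = 1) (hle : ReflectionLE e s U)
    (hsymm : ¬ IsPlaneSymmetric e s U) : ∀ᶠ s' in 𝓝 s, ReflectionLE e s' U := by
  obtain ⟨ε, hε, hsmall⟩ := hsmall
  have he0 : e ≠ 0 := fun h0 => by simp [h0] at he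
  have hlim : Tendsto (fun s' => ∫⁻ X in excessSet e s' U, U X ^ (θ + 1) ∂(halfVolume n))
      (𝓝 s) (𝓝 0) := by
    refine tendsto_setLIntegral_zero_of_ae_eventually_notMem (h.measurable_fst.pow_const _)
      h.energy_ne_top (fun s' => measurableSet_excessSet h.measurable_fst) ?_
    filter_upwards [ae_inner_ne he0 s, ae_mem_upperHalf] with X hX hXu
    rcases hX.lt_or_gt with hlt | hgt
    · filter_upwards [eventually_gt_nhds hlt] with s' hs' hmem using hs'.not_ge hmem.1
    · have hstrict := h.fst_lt_planeReflection he (h.swap.reflectionLE_fst he hle) hsymm hXu hgt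
      have hcont : Continuous fun s' => planeReflection e s' X := by
        unfold planeReflection
        fun_prop
      filter_upwards [(hcont.tendsto s).eventually
        (h.lowerSemicontinuousAt (planeReflection_mem_upperHalf hXu) _ hstrict)]
        with s' hs' hmem using hs'.not_gt hmem.2
  filter_upwards [hlim.eventually_lt_const hε] with s' hs' using hsmall he hs'

lemma bddBelow_setOf_reflectionLE (h : IsEulerLagrangePair lam κ θ α β U V)
    (hsmall : SmallExcessPrinciple θ U) (he : ‖e‖ = 1) :
    BddBelow {s | ∀ s' ≥ s, ReflectionLE e s' U} := by
  obtain ⟨S, hS⟩ := h.exists_forall_ge_reflectionLE hsmall (e := -e) (by rwa [norm_neg])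
  refine ⟨-S - 1, fun s hs => ?_⟩
  by_contra! hlt
  have hsymm : ∀ s' ≥ s, s' ≤ -S → IsPlaneSymmetric e s' U := fun s' hs' hS' =>
    isPlaneSymmetric_of_reflectionLE_neg he (hs s' hs') (hS (-s') (by linarith))
  linarith [h.eq_of_isPlaneSymmetric he (hsymm (-S) (by linarith) le_rfl)
    (hsymm (-S - 1) hlt.le (by linarith))]

/-- Slide the plane in from infinity to its critical position. -/
theorem exists_isPlaneSymmetric (h : IsEulerLagrangePair lam κ θ α β U V)
    (hsmall : SmallExcessPrinciple θ U) (he : ‖e‖ = 1) :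
    ∃ s₀, IsPlaneSymmetric e s₀ U ∧ ∀ s ≥ s₀, ReflectionLE e s U := by
  set T : Set ℝ := {s | ∀ s' ≥ s, ReflectionLE e s' U}
  have hT : T.Nonempty := h.exists_forall_ge_reflectionLE hsmall he
  have hbdd : BddBelow T := h.bddBelow_setOf_reflectionLE hsmall he
  have hgt : ∀ s > sInf T, ReflectionLE e s U := fun s hs => by
    obtain ⟨r, hr, hrs⟩ := exists_lt_of_csInf_lt hT hs
    exact hr s hrs.le
  have hge : ∀ s ≥ sInf T, ReflectionLE e s U := fun s hs => by
    rcases hs.eq_or_lt with rfl | hlt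
    · exact reflectionLE_of_forall_gt he (fun X hX => h.lowerSemicontinuousAt hX) hgt
    · exact hgt s hlt
  refine ⟨sInf T, ?_, hge⟩
  by_contra hsymm
  obtain ⟨δ, hδ, hball⟩ := Metric.eventually_nhds_iff.1
    (h.eventually_reflectionLE hsmall he (hge _ le_rfl) hsymm)
  have hmem : sInf T - δ / 2 ∈ T := fun s hs => by
    rcases le_total (sInf T) s with hle | hle
    · exact hge s hle
    · refine hball ?_
      rw [Real.dist_eq, abs_lt]
      constructor <;> linarith
  linarith [csInf_le hbdd hmem]

end IsEulerLagrangePair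

end MovingPlanes

/-! ### The centre of symmetry -/

section Centre

variable {n : ℕ} {e x₀ : EuclideanSpace ℝ (Fin n)} {s : ℝ} {f : Point n → ℝ≥0∞}

/-- The composition of the reflections in the coordinate hyperplanes `xᵢ = s i`, `i ∈ A`; for `A`
the whole index set it is the point reflection about `s`. -/
def flipCoords (s : Fin n → ℝ) (A : Finset (Fin n)) (x : EuclideanSpace ℝ (Fin n)) :
    EuclideanSpace ℝ (Fin n) :=
  WithLp.toLp 2 fun i => if i ∈ A then 2 * s i - x i else x i

lemma flipCoords_empty (s : Fin n → ℝ) (x : EuclideanSpace ℝ (Fin n)) :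
    flipCoords s ∅ x = x := by
  simp [flipCoords]

lemma flipCoords_univ (s : Fin n → ℝ) (x : EuclideanSpace ℝ (Fin n)) :
    flipCoords s Finset.univ x = Equiv.pointReflection (WithLp.toLp 2 s) x := by
  ext i
  simp only [flipCoords, Finset.mem_univ, if_true, Equiv.pointReflection_apply, vsub_eq_sub,
    vadd_eq_add, PiLp.add_apply, PiLp.sub_apply]
  ring

lemma flipCoords_insert (s : Fin n → ℝ) {A : Finset (Fin n)} {i : Fin n} (hi : i ∉ A)
    (x : EuclideanSpace ℝ (Fin n)) (t : ℝ) :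
    (flipCoords s (insert i A) x, t) =
      planeReflection (EuclideanSpace.single i 1) (s i) (flipCoords s A x, t) := by
  refine Prod.ext ?_ rfl
  ext j
  simp only [flipCoords, planeReflection, EuclideanSpace.inner_single_left, PiLp.sub_apply,
    PiLp.smul_apply, PiLp.single_apply, Finset.mem_insert]
  rcases eq_or_ne j i with rfl | hj
  · simp only [true_or, if_true, if_neg hi, map_one, smul_eq_mul]
    ring
  · simp [hj]

lemma apply_flipCoords {s : Fin n → ℝ}
    (hs : ∀ i, IsPlaneSymmetric (EuclideanSpace.single i 1) (s i) f) (A : Finset (Fin n))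
    (x : EuclideanSpace ℝ (Fin n)) {t : ℝ} (ht : 0 < t) : f (flipCoords s A x, t) = f (x, t) := by
  induction A using Finset.induction_on with
  | empty => rw [flipCoords_empty]
  | insert i A hi ih => rw [flipCoords_insert s hi, hs i _ ht, ih]

lemma planeReflection_pointReflection (e x₀ : EuclideanSpace ℝ (Fin n)) (s : ℝ)
    (x : EuclideanSpace ℝ (Fin n)) (t : ℝ) :
    planeReflection e s (Equiv.pointReflection x₀ x, t) =
      (Equiv.pointReflection x₀ (planeReflection e (2 * inner ℝ e x₀ - s) (x, t)).1, t) := by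
  refine Prod.ext ?_ rfl
  simp only [planeReflection, Equiv.pointReflection_apply, vsub_eq_sub, vadd_eq_add,
    inner_add_right, inner_sub_right]
  module

lemma isPlaneSymmetric_of_pointReflection
    (hf : ∀ x, ∀ t > 0, f (Equiv.pointReflection x₀ x, t) = f (x, t)) (h : IsPlaneSymmetric e s f) :
    IsPlaneSymmetric e (2 * inner ℝ e x₀ - s) f := by
  rintro ⟨x, t⟩ ht
  calc f (planeReflection e (2 * inner ℝ e x₀ - s) (x, t))
      = f (planeReflection e s (Equiv.pointReflection x₀ x, t)) := by
        rw [planeReflection_pointReflection]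
        exact (hf _ t ht).symm
    _ = f (Equiv.pointReflection x₀ x, t) := h _ ht
    _ = f (x, t) := hf x t ht

/-- `f` is nonincreasing in the distance to the vertical axis over `x₀`. -/
def IsCylindricallyDecreasing {R : Type*} [LE R] (x₀ : EuclideanSpace ℝ (Fin n))
    (f : Point n → R) : Prop :=
  ∀ t > 0, ∀ x x', ‖x - x₀‖ ≤ ‖x' - x₀‖ → f (x', t) ≤ f (x, t)

lemma IsCylindricallyDecreasing.apply_eq {R : Type*} [PartialOrder R] {f : Point n → R}
    (hf : IsCylindricallyDecreasing x₀ f) {x x' : EuclideanSpace ℝ (Fin n)}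
    (hxx' : ‖x - x₀‖ = ‖x' - x₀‖) {t : ℝ} (ht : 0 < t) : f (x, t) = f (x', t) :=
  le_antisymm (hf t ht x' x hxx'.ge) (hf t ht x x' hxx'.le)

lemma IsCylindricallyDecreasing.of_indicator_ofReal {u : Point n → ℝ}
    (hu : ∀ X ∈ upperHalf n, 0 ≤ u X)
    (h : IsCylindricallyDecreasing x₀ ((upperHalf n).indicator fun X => ENNReal.ofReal (u X))) :
    IsCylindricallyDecreasing x₀ u := by
  intro t ht x x' hxx'
  have hmem : ∀ y : EuclideanSpace ℝ (Fin n), (y, t) ∈ upperHalf n := fun _ => ht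
  have hle := h t ht x x' hxx'
  rwa [Set.indicator_of_mem (hmem x), Set.indicator_of_mem (hmem x'),
    ENNReal.ofReal_le_ofReal_iff (hu _ (hmem x))] at hle

/-- If `x` is at least as close to `x₀` as `x'`, then `x₀` lies on the side of `x` of the
perpendicular bisector of `x` and `x'`. -/
lemma isCylindricallyDecreasing_of_reflectionLE
    (h : ∀ e : EuclideanSpace ℝ (Fin n), ‖e‖ = 1 → ∀ s ≥ inner ℝ e x₀, ReflectionLE e s f) :
    IsCylindricallyDecreasing x₀ f := by
  intro t ht x x' hxx'
  rcases eq_or_ne x' x with rfl | hne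
  · exact le_rfl
  set d := ‖x' - x‖
  have hd : 0 < d := norm_pos_iff.2 (sub_ne_zero.2 hne)
  set e := d⁻¹ • (x' - x)
  have he : ‖e‖ = 1 := norm_smul_inv_norm (𝕜 := ℝ) (sub_ne_zero.2 hne)
  have hx' : x' = x + d • e := by simp [e, smul_smul, hd.ne']
  have hinner : inner ℝ e x' = inner ℝ e x + d := by
    rw [hx', inner_add_right, inner_smul_right, real_inner_self_eq_norm_sq, he]
    ring
  have hside : inner ℝ e x₀ ≤ inner ℝ e x + d / 2 := by
    have hsq : ‖x - x₀‖ ^ 2 ≤ ‖x' - x₀‖ ^ 2 := by gcongr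
    rw [hx', add_sub_right_comm, norm_add_sq_real, inner_smul_right, norm_smul, he,
      real_inner_comm, inner_sub_right, Real.norm_of_nonneg hd.le] at hsq
    nlinarith
  have hreflect : planeReflection e (inner ℝ e x + d / 2) (x', t) = (x, t) := by
    refine Prod.ext ?_ rfl
    simp only [planeReflection, hinner]
    rw [hx']
    module
  have hle := h e he _ hside (x', t) ht (by rw [hinner]; linarith)
  rwa [hreflect] at hle

namespace IsEulerLagrangePair

variable {lam κ θ α β : ℝ} {U V : Point n → ℝ≥0∞}

lemma exists_forall_reflectionLE (h : IsEulerLagrangePair lam κ θ α β U V)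
    (hsmall : SmallExcessPrinciple θ U) :
    ∃ x₀, ∀ e : EuclideanSpace ℝ (Fin n), ‖e‖ = 1 → ∀ s ≥ inner ℝ e x₀, ReflectionLE e s U := by
  choose s hs using fun i : Fin n =>
    h.exists_isPlaneSymmetric hsmall (e := EuclideanSpace.single i 1) (by simp)
  have hpoint : ∀ x, ∀ t > 0, U (Equiv.pointReflection (WithLp.toLp 2 s) x, t) = U (x, t) := by
    intro x t ht
    rw [← flipCoords_univ, apply_flipCoords (fun i => (hs i).1) _ x ht]
  refine ⟨WithLp.toLp 2 s, fun e he => ?_⟩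
  obtain ⟨r, hr, hle⟩ := h.exists_isPlaneSymmetric hsmall he
  have := h.eq_of_isPlaneSymmetric he hr (isPlaneSymmetric_of_pointReflection hpoint hr)
  rwa [show inner ℝ e (WithLp.toLp 2 s) = r by linarith]

theorem exists_isCylindricallyDecreasing (h : IsEulerLagrangePair lam κ θ α β U V)
    (hsmall : SmallExcessPrinciple θ U) :
    ∃ x₀, IsCylindricallyDecreasing x₀ U ∧ IsCylindricallyDecreasing x₀ V := by
  obtain ⟨x₀, hx₀⟩ := h.exists_forall_reflectionLE hsmall
  exact ⟨x₀, isCylindricallyDecreasing_of_reflectionLE hx₀,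
    isCylindricallyDecreasing_of_reflectionLE fun e he s hs =>
      h.swap.reflectionLE_fst he (hx₀ e he s hs)⟩

end IsEulerLagrangePair

end Centre

/-! ### Uniqueness in the critical case `κ * θ = 1` -/

section GeometricMean

variable {w₁ w₂ : ℝ}

lemma rpow_mul_rpow_le_ofReal_mul_add (hw₁ : 0 < w₁) (hw₂ : 0 < w₂) (hw : w₁ + w₂ = 1)
    (p₁ p₂ : ℝ≥0∞) :
    p₁ ^ w₁ * p₂ ^ w₂ ≤ ENNReal.ofReal w₁ * p₁ + ENNReal.ofReal w₂ * p₂ := by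
  rcases eq_or_ne p₁ ⊤ with rfl | hp₁
  · simp [ENNReal.mul_top, hw₁]
  rcases eq_or_ne p₂ ⊤ with rfl | hp₂
  · simp [ENNReal.mul_top, hw₂]
  rw [← ENNReal.toReal_le_toReal (by finiteness) (by finiteness), ENNReal.toReal_mul,
    ← ENNReal.toReal_rpow, ← ENNReal.toReal_rpow,
    ENNReal.toReal_add (by finiteness) (by finiteness), ENNReal.toReal_mul, ENNReal.toReal_mul,
    ENNReal.toReal_ofReal hw₁.le, ENNReal.toReal_ofReal hw₂.le]
  exact Real.geom_mean_le_arith_mean2_weighted hw₁.le hw₂.le ENNReal.toReal_nonneg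
    ENNReal.toReal_nonneg hw

lemma eq_of_rpow_mul_rpow_eq_ofReal_mul_add (hw₁ : 0 < w₁) (hw₂ : 0 < w₂) (hw : w₁ + w₂ = 1)
    {p₁ p₂ : ℝ≥0∞} (hp₁ : p₁ ≠ ⊤) (hp₂ : p₂ ≠ ⊤)
    (h : p₁ ^ w₁ * p₂ ^ w₂ = ENNReal.ofReal w₁ * p₁ + ENNReal.ofReal w₂ * p₂) : p₁ = p₂ := by
  have hreal := congrArg ENNReal.toReal h
  rw [ENNReal.toReal_mul, ← ENNReal.toReal_rpow, ← ENNReal.toReal_rpow,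
    ENNReal.toReal_add (by finiteness) (by finiteness), ENNReal.toReal_mul, ENNReal.toReal_mul,
    ENNReal.toReal_ofReal hw₁.le, ENNReal.toReal_ofReal hw₂.le,
    Real.geom_mean_eq_arith_mean2_weighted_iff_of_pos hw₁ hw₂ ENNReal.toReal_nonneg
      ENNReal.toReal_nonneg hw] at hreal
  exact (ENNReal.toReal_eq_toReal_iff' hp₁ hp₂).1 hreal

/-- The equality case of Hölder's inequality. -/
lemma ae_eq_of_lintegral_rpow_mul_rpow_eq (hw₁ : 0 < w₁) (hw₂ : 0 < w₂) (hw : w₁ + w₂ = 1)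
    {S : Type*} [MeasurableSpace S] {μ : Measure S}
    {f g : S → ℝ≥0∞} (hf : Measurable f) (hg : Measurable g) (hf_top : ∫⁻ x, f x ∂μ ≠ ⊤)
    (hgf : ∫⁻ x, g x ∂μ = ∫⁻ x, f x ∂μ)
    (hmean : ∫⁻ x, f x ^ w₁ * g x ^ w₂ ∂μ = ∫⁻ x, f x ∂μ) : f =ᵐ[μ] g := by
  have hle : ∀ x, f x ^ w₁ * g x ^ w₂ ≤ ENNReal.ofReal w₁ * f x + ENNReal.ofReal w₂ * g x :=
    fun x => rpow_mul_rpow_le_ofReal_mul_add hw₁ hw₂ hw (f x) (g x)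
  have hsum : ∫⁻ x, ENNReal.ofReal w₁ * f x + ENNReal.ofReal w₂ * g x ∂μ = ∫⁻ x, f x ∂μ := by
    rw [lintegral_add_left (hf.const_mul _), lintegral_const_mul _ hf, lintegral_const_mul _ hg,
      hgf, ← add_mul, ← ENNReal.ofReal_add hw₁.le hw₂.le, hw, ENNReal.ofReal_one, one_mul]
  have heq := ae_eq_of_ae_le_of_lintegral_le (.of_forall hle) (hmean ▸ hf_top)
    ((hf.const_mul _).add (hg.const_mul _)).aemeasurable (hsum.trans hmean.symm).le
  filter_upwards [heq, ae_lt_top hf hf_top, ae_lt_top hg (hgf ▸ hf_top)] with x hx hfx hgx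
  exact eq_of_rpow_mul_rpow_eq_ofReal_mul_add hw₁ hw₂ hw hfx.ne hgx.ne hx

end GeometricMean

section Critical

variable {n : ℕ} {lam κ θ α β : ℝ} {U V U' V' : Point n → ℝ≥0∞}

/-- The exponents combine because `κ * θ = 1`; the factors on the left are powers of the two Picone
terms of `(A', B')` relative to `(A, B)`. -/
lemma picone_rpow_mul_picone_rpow (hκ : 0 < κ) (hκθ : κ * θ = 1) {A B : ℝ≥0∞} (A' B' K : ℝ≥0∞)
    (hA : A ≠ 0) (hA_top : A ≠ ⊤) (hB : B ≠ 0) (hB_top : B ≠ ⊤) :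
    (A' ^ (θ + 1) / A * B ^ κ * K) ^ (1 / (κ + 1)) *
      (A ^ θ * (B' ^ (κ + 1) / B) * K) ^ (κ / (κ + 1)) = A' ^ θ * B' ^ κ * K := by
  have hw₁ : 0 ≤ 1 / (κ + 1) := by positivity
  have hw₂ : 0 ≤ κ / (κ + 1) := by positivity
  have hA_exp : θ * (κ / (κ + 1)) = 1 / (κ + 1) := by rw [← hκθ]; ring
  have hB_exp : κ * (1 / (κ + 1)) = κ / (κ + 1) := by ring
  have hA'_exp : (θ + 1) * (1 / (κ + 1)) = θ := by
    field_simp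
    linarith
  have hB'_exp : (κ + 1) * (κ / (κ + 1)) = κ := by field_simp
  have hK : K ^ (1 / (κ + 1)) * K ^ (κ / (κ + 1)) = K := by
    rw [← ENNReal.rpow_add_of_nonneg _ _ hw₁ hw₂, ← add_div, add_comm 1 κ,
      div_self (by positivity), ENNReal.rpow_one]
  simp only [ENNReal.mul_rpow_of_nonneg _ _ hw₁, ENNReal.mul_rpow_of_nonneg _ _ hw₂,
    ENNReal.div_rpow_of_nonneg _ _ hw₁, ENNReal.div_rpow_of_nonneg _ _ hw₂, ← ENNReal.rpow_mul,
    hA_exp, hB_exp, hA'_exp, hB'_exp]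
  have hA_cancel : A' ^ θ / A ^ (1 / (κ + 1)) * A ^ (1 / (κ + 1)) = A' ^ θ :=
    ENNReal.div_mul_cancel (by simp [hA, hA_top]) (by finiteness)
  have hB_cancel : B' ^ κ / B ^ (κ / (κ + 1)) * B ^ (κ / (κ + 1)) = B' ^ κ :=
    ENNReal.div_mul_cancel (by simp [hB, hB_top]) (by finiteness)
  calc _ = (A' ^ θ / A ^ (1 / (κ + 1)) * A ^ (1 / (κ + 1))) *
        (B' ^ κ / B ^ (κ / (κ + 1)) * B ^ (κ / (κ + 1))) *
        (K ^ (1 / (κ + 1)) * K ^ (κ / (κ + 1))) := by ring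
    _ = A' ^ θ * B' ^ κ * K := by rw [hA_cancel, hB_cancel, hK]

lemma lintegral_prod_mul_weightedKernel (α β lam : ℝ) {f g : Point n → ℝ≥0∞} (hf : Measurable f)
    (hg : Measurable g) :
    ∫⁻ Z : Point n × Point n, f Z.1 * g Z.2 * weightedKernel α β lam Z.1 Z.2
        ∂((halfVolume n).prod (halfVolume n)) =
      ∫⁻ X, f X * potential α β lam g X ∂(halfVolume n) := by
  rw [lintegral_prod _ (by fun_prop)]
  refine lintegral_congr fun X => ?_
  simp only [mul_assoc]
  exact lintegral_const_mul _ (by fun_prop)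

lemma ae_mem_upperHalf_prod :
    ∀ᵐ Z ∂((halfVolume n).prod (halfVolume n)), Z ∈ upperHalf n ×ˢ upperHalf n := by
  rw [halfVolume, Measure.prod_restrict]
  exact ae_restrict_mem (measurableSet_upperHalf.prod measurableSet_upperHalf)

namespace IsEulerLagrangePair

lemma lintegral_div_mul_potential (h : IsEulerLagrangePair lam κ θ α β U V) (w : Point n → ℝ≥0∞) :
    ∫⁻ X, w X / U X * potential α β lam (fun Y => V Y ^ κ) X ∂(halfVolume n) =
      ∫⁻ X, w X ∂(halfVolume n) := by
  refine setLIntegral_congr_fun measurableSet_upperHalf fun X hX => ?_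
  simp only [← h.fst_eq X hX, ENNReal.div_mul_cancel (h.fst_ne_zero X hX) (h.fst_ne_top X)]

lemma picone_ae_eq (h : IsEulerLagrangePair lam κ θ α β U V)
    (h' : IsEulerLagrangePair lam κ θ α β U' V') (hκθ : κ * θ = 1) :
    (fun Z : Point n × Point n =>
        U' Z.1 ^ (θ + 1) / U Z.1 * V Z.2 ^ κ * weightedKernel α β lam Z.1 Z.2)
      =ᵐ[(halfVolume n).prod (halfVolume n)]
        fun Z => U Z.1 ^ θ * (V' Z.2 ^ (κ + 1) / V Z.2) * weightedKernel α β lam Z.1 Z.2 := by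
  have hκ := h.κ_pos
  have hU := h.measurable_fst
  have hV := h.measurable_snd
  have hU' := h'.measurable_fst
  have hV' := h'.measurable_snd
  have hfst : ∫⁻ Z : Point n × Point n,
      U' Z.1 ^ (θ + 1) / U Z.1 * V Z.2 ^ κ * weightedKernel α β lam Z.1 Z.2
        ∂((halfVolume n).prod (halfVolume n)) = ∫⁻ X, U' X ^ (θ + 1) ∂(halfVolume n) := by
    rw [lintegral_prod_mul_weightedKernel (f := fun X => U' X ^ (θ + 1) / U X) α β lam
      (by fun_prop) (hV.pow_const κ), h.lintegral_div_mul_potential]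
  have hsnd : ∫⁻ Z : Point n × Point n,
      U Z.1 ^ θ * (V' Z.2 ^ (κ + 1) / V Z.2) * weightedKernel α β lam Z.1 Z.2
        ∂((halfVolume n).prod (halfVolume n)) = ∫⁻ X, U' X ^ (θ + 1) ∂(halfVolume n) := by
    rw [lintegral_prod_mul_weightedKernel (g := fun Y => V' Y ^ (κ + 1) / V Y) α β lam
      (hU.pow_const θ) (by fun_prop), lintegral_mul_potential α β lam (by fun_prop) (by fun_prop),
      h.swap.lintegral_div_mul_potential, h'.energy_eq]
  refine ae_eq_of_lintegral_rpow_mul_rpow_eq (w₁ := 1 / (κ + 1)) (w₂ := κ / (κ + 1))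
    (by positivity) (by positivity) (by field_simp; ring) (by fun_prop) (by fun_prop)
    (hfst ▸ h'.energy_ne_top) (hsnd.trans hfst.symm) ?_
  calc _ = ∫⁻ Z : Point n × Point n, U' Z.1 ^ θ * V' Z.2 ^ κ * weightedKernel α β lam Z.1 Z.2
        ∂((halfVolume n).prod (halfVolume n)) := by
        refine lintegral_congr_ae (ae_mem_upperHalf_prod.mono fun Z hZ => ?_)
        exact picone_rpow_mul_picone_rpow hκ hκθ _ _ _ (h.fst_ne_zero _ hZ.1) (h.fst_ne_top _)
          (h.snd_ne_zero _ hZ.2) (h.snd_ne_top _)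
    _ = ∫⁻ X, U' X ^ (θ + 1) ∂(halfVolume n) := by
        rw [lintegral_prod_mul_weightedKernel α β lam (hU'.pow_const θ) (hV'.pow_const κ),
          h'.lintegral_rpow_mul_potential]
    _ = _ := hfst.symm

/-- The equality case of Hölder's inequality makes `U'(X)^(θ+1) V(Y)^(κ+1)` symmetric in the two
pairs; integrate in `Y`. -/
lemma ae_eq_fst_of_energy_eq (h : IsEulerLagrangePair lam κ θ α β U V)
    (h' : IsEulerLagrangePair lam κ θ α β U' V') (hκθ : κ * θ = 1)
    (henergy : ∫⁻ X, U' X ^ (θ + 1) ∂(halfVolume n) = ∫⁻ X, U X ^ (θ + 1) ∂(halfVolume n)) :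
    U' =ᵐ[halfVolume n] U := by
  have hθ : 0 < θ + 1 := by linarith [h.θ_pos]
  filter_upwards [Measure.ae_ae_of_ae_prod (h.picone_ae_eq h' hκθ), ae_mem_upperHalf] with X hX hXu
  have hprop : ∀ᵐ Y ∂(halfVolume n),
      U' X ^ (θ + 1) * V Y ^ (κ + 1) = U X ^ (θ + 1) * V' Y ^ (κ + 1) := by
    filter_upwards [hX, ae_mem_upperHalf, ae_weightedKernel_ne_zero α β h.lam_pos.le hXu,
      ae_weightedKernel_ne_top α β lam hXu] with Y hY hYu hK hK_top
    have hU_cancel : U' X ^ (θ + 1) / U X * U X = U' X ^ (θ + 1) :=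
      ENNReal.div_mul_cancel (h.fst_ne_zero X hXu) (h.fst_ne_top X)
    have hV_cancel : V' Y ^ (κ + 1) / V Y * V Y = V' Y ^ (κ + 1) :=
      ENNReal.div_mul_cancel (h.snd_ne_zero Y hYu) (h.snd_ne_top Y)
    rw [ENNReal.mul_left_inj hK hK_top] at hY
    calc U' X ^ (θ + 1) * V Y ^ (κ + 1)
        = U' X ^ (θ + 1) / U X * V Y ^ κ * (U X * V Y) := by
          rw [ENNReal.rpow_add_of_nonneg κ 1 h.κ_pos.le zero_le_one, ENNReal.rpow_one,
            mul_mul_mul_comm, hU_cancel]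
      _ = U X ^ θ * (V' Y ^ (κ + 1) / V Y) * (U X * V Y) := by rw [hY]
      _ = U X ^ (θ + 1) * V' Y ^ (κ + 1) := by
          rw [ENNReal.rpow_add_of_nonneg θ 1 h.θ_pos.le zero_le_one, ENNReal.rpow_one,
            mul_mul_mul_comm, hV_cancel]
  have hint := lintegral_congr_ae hprop
  rw [lintegral_const_mul _ (h.measurable_snd.pow_const _),
    lintegral_const_mul _ (h'.measurable_snd.pow_const _), ← h.energy_eq, ← h'.energy_eq, henergy,
    ENNReal.mul_left_inj h.energy_ne_zero h.energy_ne_top] at hint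
  exact ENNReal.rpow_left_injective hθ.ne' hint

lemma comp_planeReflection (h : IsEulerLagrangePair lam κ θ α β U V)
    {e : EuclideanSpace ℝ (Fin n)} (he : ‖e‖ = 1) (s : ℝ) :
    IsEulerLagrangePair lam κ θ α β (fun X => U (planeReflection e s X))
      (fun X => V (planeReflection e s X)) where
  lam_pos := h.lam_pos
  κ_pos := h.κ_pos
  θ_pos := h.θ_pos
  measurable_fst := h.measurable_fst.comp measurable_planeReflection
  measurable_snd := h.measurable_snd.comp measurable_planeReflection
  fst_ne_top _ := h.fst_ne_top _
  snd_ne_top _ := h.snd_ne_top _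
  fst_ne_zero _ hX := h.fst_ne_zero _ (planeReflection_mem_upperHalf hX)
  snd_ne_zero _ hX := h.snd_ne_zero _ (planeReflection_mem_upperHalf hX)
  fst_eq X hX := by
    rw [potential_comp_planeReflection he s α β lam (h.measurable_snd.pow_const κ)]
    exact h.fst_eq _ (planeReflection_mem_upperHalf hX)
  snd_eq X hX := by
    rw [potential_comp_planeReflection he s β α lam (h.measurable_fst.pow_const θ)]
    exact h.snd_eq _ (planeReflection_mem_upperHalf hX)
  energy_ne_top := by
    rw [(measurePreserving_planeReflection he s).lintegral_comp (h.measurable_fst.pow_const _)]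
    exact h.energy_ne_top

/-- By uniqueness a solution would be symmetric about every plane. -/
theorem mul_ne_one (h : IsEulerLagrangePair lam κ θ α β U V) (hn : 1 ≤ n) : κ * θ ≠ 1 := by
  intro hκθ
  set e : EuclideanSpace ℝ (Fin n) := EuclideanSpace.single ⟨0, hn⟩ 1
  have he : ‖e‖ = 1 := by simp [e]
  have hsymm : ∀ s, IsPlaneSymmetric e s V := fun s =>
    h.swap.isPlaneSymmetric_fst_of_ae_snd he
      (h.ae_eq_fst_of_energy_eq (h.comp_planeReflection he s) hκθ
        ((measurePreserving_planeReflection he s).lintegral_comp (h.measurable_fst.pow_const _)))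
  exact zero_ne_one (h.swap.eq_of_isPlaneSymmetric he (hsymm 0) (hsymm 1))

end IsEulerLagrangePair

end Critical

/-! ### Supercritical exponents -/

namespace IsEulerLagrangePair

variable {n : ℕ} {lam κ θ α β : ℝ} {U V : Point n → ℝ≥0∞}

lemma smallExcessPrinciple_of_one_lt (h : IsEulerLagrangePair lam κ θ α β U V) (hθ : 1 < θ)
    (hκθ : 1 < κ * θ) (hα : α < 1 / (θ + 1)) (hβ : β < 1 / (κ + 1)) (hαβ : 0 ≤ α + β)
    (hbal : 1 / (θ + 1) + 1 / (κ + 1) = (α + β + lam) / ((n : ℝ) + 1)) :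
    SmallExcessPrinciple θ U := by
  have hκ_pos := h.κ_pos
  simp only [one_div] at hα hβ hbal
  have hsum : (θ + 1)⁻¹ + (κ + 1)⁻¹ < 1 := by
    rw [← one_div, ← one_div, div_add_div _ _ (by positivity) (by positivity),
      div_lt_one (by positivity)]
    linarith
  obtain ⟨C, hC_top, hC⟩ := exists_isBilinearBound_weightedKernel (by positivity) (by positivity)
    hsum ((_root_.eq_div_iff (by positivity)).1 hbal) hα hβ hαβ h.lam_pos.le
  exact h.smallExcessPrinciple hC hC_top hθ hκθ

theorem exists_isCylindricallyDecreasing_of_one_lt_mul (h : IsEulerLagrangePair lam κ θ α β U V)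
    (hκθ : 1 < κ * θ) (hα : α < 1 / (θ + 1)) (hβ : β < 1 / (κ + 1)) (hαβ : 0 ≤ α + β)
    (hbal : 1 / (θ + 1) + 1 / (κ + 1) = (α + β + lam) / ((n : ℝ) + 1)) :
    ∃ x₀, IsCylindricallyDecreasing x₀ U ∧ IsCylindricallyDecreasing x₀ V := by
  rcases lt_or_ge 1 θ with hθ | hθ
  · exact h.exists_isCylindricallyDecreasing
      (h.smallExcessPrinciple_of_one_lt hθ hκθ hα hβ hαβ hbal)
  · have hκ : 1 < κ := hκθ.trans_le (mul_le_of_le_one_right h.κ_pos.le hθ)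
    obtain ⟨x₀, hV, hU⟩ := h.swap.exists_isCylindricallyDecreasing
      (h.swap.smallExcessPrinciple_of_one_lt hκ (mul_comm κ θ ▸ hκθ) hβ hα (add_comm α β ▸ hαβ)
        (by rw [add_comm, hbal, add_comm α]))
    exact ⟨x₀, hU, hV⟩

end IsEulerLagrangePair

/-- Cylindrical symmetry of positive solutions of the Euler–Lagrange integral system. -/
theorem cylindrical_symmetry_euler_lagrange
    (n : ℕ) (hn : 1 ≤ n) (lam κ θ α β : ℝ)
    (hlam0 : 0 < lam) (hlam1 : lam < (n : ℝ) + 1)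
    (hκ : 0 < κ) (hθ : 0 < θ) (hκθ : 1 ≤ κ * θ)
    (hα : α < 1 / (θ + 1)) (hβ : β < 1 / (κ + 1)) (hαβ : 0 ≤ α + β)
    (hbal : 1 / (θ + 1) + 1 / (κ + 1) = (α + β + lam) / ((n : ℝ) + 1))
    (u v : EuclideanSpace ℝ (Fin n) × ℝ → ℝ)
    (hu_pos : ∀ X ∈ upperHalf n, 0 < u X)
    (hv_pos : ∀ X ∈ upperHalf n, 0 < v X)
    (hu_eq : ∀ X ∈ upperHalf n,
      ENNReal.ofReal (u X) = ENNReal.ofReal (X.2 ^ (-α)) *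
        ∫⁻ Y in upperHalf n,
          ENNReal.ofReal (v Y ^ κ) * ENNReal.ofReal (Y.2 ^ (-β)) *
            ENNReal.ofReal (hsDist X Y) ^ (-lam))
    (hv_eq : ∀ Y ∈ upperHalf n,
      ENNReal.ofReal (v Y) = ENNReal.ofReal (Y.2 ^ (-β)) *
        ∫⁻ X in upperHalf n,
          ENNReal.ofReal (u X ^ θ) * ENNReal.ofReal (X.2 ^ (-α)) *
            ENNReal.ofReal (hsDist X Y) ^ (-lam))
    (hu_int : (∫⁻ X in upperHalf n, ENNReal.ofReal (u X ^ (θ + 1))) < ⊤) :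
    ∃ x₀ : EuclideanSpace ℝ (Fin n), ∀ t : ℝ, 0 < t →
      ∀ x x' : EuclideanSpace ℝ (Fin n),
        (‖x - x₀‖ = ‖x' - x₀‖ → u (x, t) = u (x', t) ∧ v (x, t) = v (x', t)) ∧
        (‖x - x₀‖ ≤ ‖x' - x₀‖ → u (x', t) ≤ u (x, t) ∧ v (x', t) ≤ v (x, t)) := by
  have h := isEulerLagrangePair_indicator hlam0 hκ hθ hu_pos hv_pos hu_eq hv_eq hu_int
  have hκθ' : 1 < κ * θ := hκθ.lt_of_ne (h.mul_ne_one hn).symm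
  obtain ⟨x₀, hU, hV⟩ := h.exists_isCylindricallyDecreasing_of_one_lt_mul hκθ' hα hβ hαβ hbal
  have hu : IsCylindricallyDecreasing x₀ u := .of_indicator_ofReal (fun X hX => (hu_pos X hX).le) hU
  have hv : IsCylindricallyDecreasing x₀ v := .of_indicator_ofReal (fun X hX => (hv_pos X hX).le) hV
  exact ⟨x₀, fun t ht x x' =>
    ⟨fun heq => ⟨hu.apply_eq heq ht, hv.apply_eq heq ht⟩,
      fun hle => ⟨hu t ht x x' hle, hv t ht x x' hle⟩⟩⟩
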